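/- For every d ≥ 1 and r ∈ (1,∞) there is a constant C = C(d,r) ≥ 1 such that for every locally integrable b : ℝ^d → ℂ one has C⁻¹ · ‖M♯b‖_{L^r(ℝ^d)} ≤ ‖b‖_{∙L^r(ℝ^d)} ≤ C · ‖M♯b‖_{L^r(ℝ^d)}, both sides possibly +∞. -/

import Mathlib

/-!
The two bounds are the Hardy–Littlewood maximal theorem and a Fefferman–Stein inequality.

For the lower bound, `M♯b ≤ 2 M(b - c)` pointwise for every constant `c`, where `M` is the
uncentred maximal function over cubes (`sharpMaximal_le`). The weak type `(1,1)` bound for `M` comes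
from the Vitali covering lemma (`cubeMaximal_weak`); cutting off the part of the function below
height `t / 2` and summing over the dyadic heights `t = 2^k` turns it into the strong `(r,r)` bound
(`cubeMaximal_strong`).

For the upper bound, fix the cube `[-a, a)^d` and its dyadic subdivisions. The good-`λ` inequality
`|{M_c b > 2t, M♯b ≤ γt}| ≤ 2γ |{M_c b > t}|` holds for the dyadic maximal function `M_c b` of the
averages of `b` minus the average `c` over `[-a, a)^d` (`Grid.good_lambda`): stop at the first
dyadic cube where the average deviates from `c` by more than `t`; the deviation there is still at
most `3t/2`, its parent having average within `t` of `c` and small mean oscillation, so the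
remaining deviation has to come from the oscillation of `b` inside the stopping cube, to which a
weak type estimate applies. Summing over dyadic heights, with `M_c b` truncated so that the term to
be absorbed is finite, and using Lebesgue differentiation (`dyGrid_tendsto`), one obtains
`∫_{[-a,a)^d} |b - c|^r ≤ C ∫ (M♯b)^r` with `C` independent of `a` (`Grid.lintegral_sub_avg_le`).
If the right side is finite, the averages `c = c(a)` remain bounded as `a → ∞`, because they are all
at bounded `L^r` distance from `b` on the unit ball; Fatou's lemma along a sequence with `c(a) → z`
bounds `∫ |b - z|^r` (`exists_lintegral_le`).
-/

open MeasureTheory ENNReal Set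

noncomputable section

/-- `Euc d` is the Euclidean space `ℝ^d`. -/
abbrev Euc (d : ℕ) := EuclideanSpace ℝ (Fin d)

/-- An axis-parallel cube in `ℝ^d`, described by its center and positive side length. -/
structure Cube (d : ℕ) where
  center : Euc d
  side : ℝ
  side_pos : 0 < side

/-- The set of points of a cube. -/
def Cube.carrier {d : ℕ} (I : Cube d) : Set (Euc d) :=
  {x | ∀ i, |x i - I.center i| ≤ I.side / 2}

/-- The average `⟨b⟩_I` of a function over a cube. -/
def cubeAvg {d : ℕ} (b : Euc d → ℂ) (I : Cube d) : ℂ :=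
  (volume I.carrier).toReal⁻¹ • ∫ x in I.carrier, b x

/-- The homogeneous Hölder seminorm `‖b‖_{Ċ^{0,α}}`, valued in `[0,∞]`. -/
def holderSeminorm {d : ℕ} (α : ℝ) (b : Euc d → ℂ) : ℝ≥0∞ :=
  ⨆ (x : Euc d) (y : Euc d) (_ : x ≠ y), ENNReal.ofReal (‖b x - b y‖ / dist x y ^ α)
/-- The norm `‖b‖_{∙L^r}` = infimum over constants `c` of the `L^r` norm of `b - c`. -/
def dotLrNorm {d : ℕ} (r : ℝ) (b : Euc d → ℂ) : ℝ≥0∞ :=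
  ⨅ c : ℂ, eLpNorm (fun x => b x - c) (ENNReal.ofReal r) volume

/-- The BMO norm of `b`, valued in `[0,∞]`. -/
def bmoNorm {d : ℕ} (b : Euc d → ℂ) : ℝ≥0∞ :=
  ⨆ I : Cube d, ENNReal.ofReal ((volume I.carrier).toReal⁻¹ * ∫ x in I.carrier, ‖b x - cubeAvg b I‖)

/-- The sharp maximal function `M♯b`. -/
def sharpMaximal {d : ℕ} (b : Euc d → ℂ) (x : Euc d) : ℝ≥0∞ :=
  ⨆ (I : Cube d) (_ : x ∈ I.carrier),
    ENNReal.ofReal ((volume I.carrier).toReal⁻¹ * ∫ y in I.carrier, ‖b y - cubeAvg b I‖)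

/-- A (countable) collection of cubes is sparse if each cube `Q` carries a measurable subset
`E Q` of at least half its measure, these subsets being pairwise disjoint. -/
def IsSparse {d : ℕ} (𝒮 : Set (Cube d)) : Prop :=
  𝒮.Countable ∧ ∃ E : Cube d → Set (Euc d),
    (∀ Q ∈ 𝒮, MeasurableSet (E Q) ∧ E Q ⊆ Q.carrier ∧ volume Q.carrier ≤ 2 * volume (E Q)) ∧
    𝒮.PairwiseDisjoint E

/-- Average of `b (·, x2)` over a cube in the first factor. -/
def avgFst {d1 d2 : ℕ} (b : Euc d1 × Euc d2 → ℂ) (I1 : Cube d1) (x2 : Euc d2) : ℂ :=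
  (volume I1.carrier).toReal⁻¹ • ∫ y1 in I1.carrier, b (y1, x2)

/-- Average of `b (x1, ·)` over a cube in the second factor. -/
def avgSnd {d1 d2 : ℕ} (b : Euc d1 × Euc d2 → ℂ) (I2 : Cube d2) (x1 : Euc d1) : ℂ :=
  (volume I2.carrier).toReal⁻¹ • ∫ y2 in I2.carrier, b (x1, y2)

/-- Average of `b` over the rectangle `I1 × I2`. -/
def avgRect {d1 d2 : ℕ} (b : Euc d1 × Euc d2 → ℂ) (I1 : Cube d1) (I2 : Cube d2) : ℂ :=
  (volume (I1.carrier ×ˢ I2.carrier)).toReal⁻¹ • ∫ x in I1.carrier ×ˢ I2.carrier, b x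

/-- The bi-parameter oscillation `osc^{1,1}(b, I1 × I2)`. -/
def osc11 {d1 d2 : ℕ} (b : Euc d1 × Euc d2 → ℂ) (I1 : Cube d1) (I2 : Cube d2) : ℝ :=
  ∫ x in I1.carrier ×ˢ I2.carrier,
    ‖b x - avgFst b I1 x.2 - avgSnd b I2 x.1 + avgRect b I1 I2‖

/-- The `L^p` "norm" (with exponent `p ∈ [1,∞]`) of an `ℝ≥0∞`-valued function. -/
def lpNormENN {α : Type*} [MeasurableSpace α] (μ : Measure α) (p : ℝ≥0∞) (g : α → ℝ≥0∞) : ℝ≥0∞ :=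
  if p = ∞ then essSup g μ else (∫⁻ x, g x ^ p.toReal ∂μ) ^ (1 / p.toReal)

/-- The mixed norm `‖F‖_{L^{v1}_{x1} L^{v2}_{x2}}`. -/
def mixedNorm {d1 d2 : ℕ} {E : Type*} [NormedAddCommGroup E] (v1 v2 : ℝ≥0∞)
    (F : Euc d1 × Euc d2 → E) : ℝ≥0∞ :=
  lpNormENN volume v1 (fun x1 => lpNormENN volume v2 (fun x2 => (‖F (x1, x2)‖₊ : ℝ≥0∞)))

/-- The oscillation `osc^{v1,v2}(b, I1 × I2)` with general mixed exponents. -/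
def oscMixed {d1 d2 : ℕ} (v1 v2 : ℝ≥0∞) (b : Euc d1 × Euc d2 → ℂ)
    (I1 : Cube d1) (I2 : Cube d2) : ℝ≥0∞ :=
  mixedNorm v1 v2 ((I1.carrier ×ˢ I2.carrier).indicator
    (fun x => b x - avgFst b I1 x.2 - avgSnd b I2 x.1 + avgRect b I1 I2))

/-- A standard Calderón–Zygmund kernel on `ℝ^n` with exponent `α` and constant `CK`. -/
def IsCZKernel (n : ℕ) (α CK : ℝ) (K : Euc n → Euc n → ℂ) : Prop :=
  (∀ x y : Euc n, x ≠ y → ‖K x y‖ ≤ CK / dist x y ^ (n : ℝ)) ∧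
  (∀ x x' y : Euc n, x ≠ y → dist x x' ≤ dist x y / 2 →
    ‖K x y - K x' y‖ + ‖K y x - K y x'‖ ≤ CK * dist x x' ^ α / dist x y ^ ((n : ℝ) + α))

/-- Symmetric non-degeneracy of a kernel with constant `c₀`. -/
def SymNonDeg (n : ℕ) (c₀ : ℝ) (K : Euc n → Euc n → ℂ) : Prop :=
  ∀ (y : Euc n) (r : ℝ), 0 < r → ∃ x : Euc n, r ≤ dist x y ∧
    1 / (c₀ * r ^ (n : ℝ)) ≤ ‖K x y‖ ∧ 1 / (c₀ * r ^ (n : ℝ)) ≤ ‖K y x‖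

/-- Distance between two sets in a metric space. -/
def setDist {α : Type*} [PseudoMetricSpace α] (s t : Set α) : ℝ :=
  sInf (Set.image2 dist s t)

/-- An admissible configuration: the rectangles `J1 × J2` and `L1 × L2` have matching side
lengths in each parameter, and separation comparable to the common side length, with
comparability constants `c1 ≤ c2`. -/
def IsAdmissible {d1 d2 : ℕ} (c1 c2 : ℝ) (J1 L1 : Cube d1) (J2 L2 : Cube d2) : Prop :=
  J1.side = L1.side ∧ J2.side = L2.side ∧
  c1 * J1.side ≤ setDist J1.carrier L1.carrier ∧ setDist J1.carrier L1.carrier ≤ c2 * J1.side ∧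
  c1 * J2.side ≤ setDist J2.carrier L2.carrier ∧ setDist J2.carrier L2.carrier ≤ c2 * J2.side

/-- The difference `B(x,y) = b(x1,x2) − b(x1,y2) − b(y1,x2) + b(y1,y2)`. -/
def biB {d1 d2 : ℕ} (b : Euc d1 × Euc d2 → ℂ) (x y : Euc d1 × Euc d2) : ℂ :=
  b (x.1, x.2) - b (x.1, y.2) - b (y.1, x.2) + b (y.1, y.2)

/-- The bilinear form `Λ(f1, f2) = ∬ B(x,y) K1(x1,y1) K2(x2,y2) f1(y) f2(x) dy dx`. -/
def biCommForm {d1 d2 : ℕ} (b : Euc d1 × Euc d2 → ℂ) (K1 : Euc d1 → Euc d1 → ℂ)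
    (K2 : Euc d2 → Euc d2 → ℂ) (f1 f2 : Euc d1 × Euc d2 → ℂ) : ℂ :=
  ∫ x : Euc d1 × Euc d2, ∫ y : Euc d1 × Euc d2,
    biB b x y * K1 x.1 y.1 * K2 x.2 y.2 * f1 y * f2 x

/-! ### Dyadic layer-cake estimates -/

/-- The geometric constant `∑_{j ≥ 0} 2^{-js}`. -/
def geomConst (s : ℝ) : ℝ≥0∞ := (1 - (2 : ℝ≥0∞) ^ (-s))⁻¹

lemma geomConst_ne_top {s : ℝ} (hs : 0 < s) : geomConst s ≠ ∞ := by
  have h : (2 : ℝ≥0∞) ^ (-s) < 1 := ENNReal.rpow_lt_one_of_one_lt_of_neg (by norm_num) (by linarith)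
  simp only [geomConst, ne_eq, ENNReal.inv_eq_top]
  exact (tsub_pos_of_lt h).ne'

lemma rpow_le_layer {s : ℝ} (hs : 0 < s) (y : ℝ≥0∞) :
    y ^ s ≤ 2 ^ s * ∑' k : ℤ, if (2 : ℝ≥0∞) ^ k < y then ((2 : ℝ≥0∞) ^ k) ^ s else 0 := by
  rcases eq_or_ne y 0 with rfl | h0
  · simp [hs]
  rcases eq_or_ne y ∞ with rfl | ht
  · have : ∑' k : ℤ, (if (2 : ℝ≥0∞) ^ k < ∞ then ((2 : ℝ≥0∞) ^ k) ^ s else 0) = ∞ := by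
      rw [eq_top_iff]
      refine (ENNReal.tsum_const_eq_top_of_ne_zero (α := ℕ) (one_ne_zero (α := ℝ≥0∞))).ge.trans ?_
      refine le_trans ?_ (ENNReal.tsum_comp_le_tsum_of_injective
        (f := ((↑) : ℕ → ℤ)) Nat.cast_injective _)
      refine ENNReal.tsum_le_tsum fun n => ?_
      have h1 : (2 : ℝ≥0∞) ^ (n : ℤ) < ∞ := by
        rw [zpow_natCast]; exact ENNReal.pow_lt_top (by norm_num)
      rw [if_pos h1]
      refine ENNReal.one_le_rpow ?_ hs
      rw [zpow_natCast]; exact one_le_pow₀ (by norm_num)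
    rw [this, ENNReal.mul_top]
    · exact le_top
    · simp
  obtain ⟨k, hk1, hk2⟩ := ENNReal.exists_mem_Ioc_zpow (y := 2) h0 ht (by norm_num) (by norm_num)
  calc y ^ s ≤ ((2 : ℝ≥0∞) ^ (k + 1)) ^ s := ENNReal.rpow_le_rpow hk2 hs.le
    _ = 2 ^ s * (if (2 : ℝ≥0∞) ^ k < y then ((2 : ℝ≥0∞) ^ k) ^ s else 0) := by
        rw [if_pos hk1, ENNReal.zpow_add (by norm_num) (by norm_num), zpow_one, mul_comm,
          ENNReal.mul_rpow_of_nonneg _ _ hs.le]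
    _ ≤ _ := by
        gcongr
        exact ENNReal.le_tsum (f := fun k : ℤ =>
          if (2 : ℝ≥0∞) ^ k < y then ((2 : ℝ≥0∞) ^ k) ^ s else 0) k

lemma layer_le_rpow {s : ℝ} (hs : 0 < s) (y : ℝ≥0∞) :
    (∑' k : ℤ, if (2 : ℝ≥0∞) ^ k < y then ((2 : ℝ≥0∞) ^ k) ^ s else 0) ≤ geomConst s * y ^ s := by
  rcases eq_or_ne y 0 with rfl | h0
  · simp
  rcases eq_or_ne y ∞ with rfl | ht
  · rw [ENNReal.top_rpow_of_pos hs, ENNReal.mul_top]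
    · exact le_top
    · simp [geomConst]
  obtain ⟨k, hk1, hk2⟩ := ENNReal.exists_mem_Ioc_zpow (y := 2) h0 ht (by norm_num) (by norm_num)
  have hinj : Function.Injective (fun j : ℕ => k - (j : ℤ)) := fun a b h => by
    simpa using h
  rw [← hinj.tsum_eq]
  · calc ∑' j : ℕ, (if (2 : ℝ≥0∞) ^ (k - (j : ℤ)) < y then ((2 : ℝ≥0∞) ^ (k - (j : ℤ))) ^ s else 0)
        ≤ ∑' j : ℕ, y ^ s * ((2 : ℝ≥0∞) ^ (-s)) ^ j := by
          refine ENNReal.tsum_le_tsum fun j => ?_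
          split_ifs
          · rw [sub_eq_add_neg, ENNReal.zpow_add (by norm_num) (by norm_num),
              ENNReal.mul_rpow_of_nonneg _ _ hs.le]
            gcongr
            rw [← ENNReal.rpow_intCast, ← ENNReal.rpow_mul, ← ENNReal.rpow_natCast,
              ← ENNReal.rpow_mul]
            apply le_of_eq; congr 1; push_cast; ring
          · exact zero_le
      _ = geomConst s * y ^ s := by
          rw [ENNReal.tsum_mul_left, ENNReal.tsum_geometric, mul_comm]; rfl
  · intro m hm
    simp only [Function.mem_support, ne_eq, ite_eq_right_iff, Classical.not_imp] at hm
    have : (2 : ℝ≥0∞) ^ m < 2 ^ (k + 1) := hm.1.trans_le hk2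
    have hmk : m < k + 1 := by
      by_contra hcon
      exact absurd (ENNReal.zpow_le_of_le (by norm_num) (not_lt.mp hcon)) (not_le.mpr this)
    refine ⟨(k - m).toNat, ?_⟩
    simp only
    omega

section Layer
variable {X : Type*} [MeasurableSpace X] {μ : Measure X}

/-- No measurability of `g` is needed, since `∫⁻` is a lower integral. -/
lemma lintegral_rpow_le_layer {s : ℝ} (hs : 0 < s) (g : X → ℝ≥0∞) :
    ∫⁻ x, g x ^ s ∂μ ≤ 2 ^ s * ∑' k : ℤ, ((2 : ℝ≥0∞) ^ k) ^ s * μ {x | (2 : ℝ≥0∞) ^ k < g x} := by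
  set E : ℤ → Set X := fun k => toMeasurable μ {x | (2 : ℝ≥0∞) ^ k < g x} with hE
  have hm : ∀ k, Measurable ((E k).indicator fun _ => ((2 : ℝ≥0∞) ^ k) ^ s) := fun k =>
    measurable_const.indicator (measurableSet_toMeasurable _ _)
  calc ∫⁻ x, g x ^ s ∂μ
      ≤ ∫⁻ x, 2 ^ s * ∑' k : ℤ, (E k).indicator (fun _ => ((2 : ℝ≥0∞) ^ k) ^ s) x ∂μ := by
        refine lintegral_mono fun x => (rpow_le_layer hs (g x)).trans ?_
        gcongr with k
        split_ifs with h
        · have hx : x ∈ E k := subset_toMeasurable μ {x | (2 : ℝ≥0∞) ^ k < g x} h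
          rw [indicator_of_mem hx]
        · exact zero_le
    _ = 2 ^ s * ∑' k : ℤ, ((2 : ℝ≥0∞) ^ k) ^ s * μ {x | (2 : ℝ≥0∞) ^ k < g x} := by
        rw [lintegral_const_mul _ (Measurable.tsum hm),
          lintegral_tsum fun k => (hm k).aemeasurable]
        congr 1
        refine tsum_congr fun k => ?_
        rw [lintegral_indicator_const (measurableSet_toMeasurable _ _), measure_toMeasurable]

lemma layer_le_lintegral_rpow {s : ℝ} (hs : 0 < s) {g : X → ℝ≥0∞} (hg : Measurable g) :
    ∑' k : ℤ, ((2 : ℝ≥0∞) ^ k) ^ s * μ {x | (2 : ℝ≥0∞) ^ k < g x}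
      ≤ geomConst s * ∫⁻ x, g x ^ s ∂μ := by
  have hmeas : ∀ k : ℤ, MeasurableSet {x | (2 : ℝ≥0∞) ^ k < g x} := fun k =>
    measurableSet_lt measurable_const hg
  calc ∑' k : ℤ, ((2 : ℝ≥0∞) ^ k) ^ s * μ {x | (2 : ℝ≥0∞) ^ k < g x}
      = ∫⁻ x, ∑' k : ℤ, ({x | (2 : ℝ≥0∞) ^ k < g x}).indicator
          (fun _ => ((2 : ℝ≥0∞) ^ k) ^ s) x ∂μ := by
        rw [lintegral_tsum fun k => (measurable_const.indicator (hmeas k)).aemeasurable]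
        refine tsum_congr fun k => ?_
        rw [lintegral_indicator_const (hmeas k)]
    _ ≤ ∫⁻ x, geomConst s * g x ^ s ∂μ := by
        refine lintegral_mono fun x => ?_
        simpa [indicator_apply] using layer_le_rpow hs (g x)
    _ = _ := lintegral_const_mul _ (hg.pow_const s)

end Layer

/-! ### Geometry of cubes -/

section Cubes
variable {d : ℕ}

lemma Cube.carrier_eq (I : Cube d) : I.carrier = (WithLp.ofLp : Euc d → Fin d → ℝ) ⁻¹'
    univ.pi fun i => Icc (I.center i - I.side / 2) (I.center i + I.side / 2) := by
  ext x
  simp only [Cube.carrier, mem_ofPred_eq, mem_preimage, mem_univ_pi, mem_Icc, abs_le]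
  refine forall_congr' fun i => ⟨fun h => ⟨by linarith [h.1], by linarith [h.2]⟩,
    fun h => ⟨by linarith [h.1], by linarith [h.2]⟩⟩

lemma Cube.isClosed (I : Cube d) : IsClosed I.carrier := by
  rw [I.carrier_eq]
  exact (isClosed_set_pi fun i _ => isClosed_Icc).preimage (PiLp.continuous_ofLp 2 _)

lemma Cube.measurableSet (I : Cube d) : MeasurableSet I.carrier := I.isClosed.measurableSet

lemma Cube.volume_eq (I : Cube d) : volume I.carrier = ENNReal.ofReal I.side ^ d := by
  rw [I.carrier_eq, (PiLp.volume_preserving_ofLp (Fin d)).measure_preimage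
    (MeasurableSet.univ_pi fun i => measurableSet_Icc).nullMeasurableSet, volume_pi_pi]
  simp [Real.volume_Icc]

lemma Cube.volume_ne_zero (I : Cube d) : volume I.carrier ≠ 0 := by
  rw [I.volume_eq]
  exact pow_ne_zero _ (by simpa using I.side_pos)

lemma Cube.volume_ne_top (I : Cube d) : volume I.carrier ≠ ∞ := by
  rw [I.volume_eq]
  exact ENNReal.pow_ne_top ENNReal.ofReal_ne_top

lemma Cube.center_mem (I : Cube d) : I.center ∈ I.carrier := by
  intro i
  have := I.side_pos
  simp only [sub_self, abs_zero]
  linarith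

lemma Cube.interior_nonempty (I : Cube d) : (interior I.carrier).Nonempty := by
  refine ⟨I.center, mem_interior.2 ⟨(WithLp.ofLp : Euc d → Fin d → ℝ) ⁻¹'
    univ.pi fun i => Ioo (I.center i - I.side / 2) (I.center i + I.side / 2), ?_, ?_, ?_⟩⟩
  · rw [I.carrier_eq]
    exact preimage_mono (pi_mono fun i _ => Ioo_subset_Icc_self)
  · exact (isOpen_set_pi finite_univ fun i _ => isOpen_Ioo).preimage (PiLp.continuous_ofLp 2 _)
  · have := I.side_pos
    simp only [mem_preimage, mem_univ_pi, mem_Ioo]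
    exact fun i => ⟨by linarith, by linarith⟩

lemma Cube.isCompact (I : Cube d) : IsCompact I.carrier := by
  rw [I.carrier_eq]
  exact (EuclideanSpace.equiv (Fin d) ℝ).toHomeomorph.isCompact_preimage.2
    (isCompact_univ_pi fun i => isCompact_Icc)

/-- The concentric cube with five times the side length. -/
def Cube.fivefold (I : Cube d) : Cube d := ⟨I.center, 5 * I.side, by linarith [I.side_pos]⟩

lemma Cube.volume_fivefold (I : Cube d) :
    volume I.fivefold.carrier = 5 ^ d * volume I.carrier := by
  rw [Cube.volume_eq, Cube.volume_eq, Cube.fivefold, ENNReal.ofReal_mul (by norm_num), mul_pow]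
  norm_num

lemma Cube.subset_fivefold {I J : Cube d} (h : (I.carrier ∩ J.carrier).Nonempty)
    (hs : I.side ≤ 2 * J.side) : I.carrier ⊆ J.fivefold.carrier := by
  obtain ⟨z, hzI, hzJ⟩ := h
  intro x hx i
  have h1 := abs_le.1 (hx i)
  have h2 := abs_le.1 (hzI i)
  have h3 := abs_le.1 (hzJ i)
  simp only [Cube.fivefold]
  rw [abs_le]
  constructor <;> linarith [h1.1, h1.2, h2.1, h2.2, h3.1, h3.2]

end Cubes

/-! ### The Hardy–Littlewood maximal inequality -/

section Maximal
variable {d : ℕ}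

/-- The uncentred Hardy–Littlewood maximal function over axis-parallel cubes. -/
def cubeMaximal (g : Euc d → ℝ≥0∞) (x : Euc d) : ℝ≥0∞ :=
  ⨆ (I : Cube d) (_ : x ∈ I.carrier), (volume I.carrier)⁻¹ * ∫⁻ y in I.carrier, g y

/-- Weak type `(1,1)`, from the Vitali covering lemma. -/
lemma cubeMaximal_weak (hd : 1 ≤ d) (g : Euc d → ℝ≥0∞) {t : ℝ≥0∞}
    (ht : t ≠ 0) (ht' : t ≠ ∞) :
    t * volume {x | t < cubeMaximal g x} ≤ 5 ^ d * ∫⁻ x, g x := by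
  rcases eq_or_ne (∫⁻ x, g x) ∞ with hG | hG
  · rw [hG, ENNReal.mul_top (by positivity)]
    exact le_top
  set T : Set (Cube d) := {I | t * volume I.carrier ≤ ∫⁻ y in I.carrier, g y} with hT
  have hbound : ∀ I ∈ T, I.side ≤ max 1 ((∫⁻ x, g x) / t).toReal := by
    intro I hI
    rcases le_total I.side 1 with h1 | h1
    · exact h1.trans (le_max_left _ _)
    refine le_trans ?_ (le_max_right _ _)
    have h2 : volume I.carrier ≤ (∫⁻ x, g x) / t := by
      rw [ENNReal.le_div_iff_mul_le (Or.inl ht) (Or.inl ht'), mul_comm]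
      exact (show t * volume I.carrier ≤ _ from hI).trans (setLIntegral_le_lintegral _ _)
    calc I.side ≤ I.side ^ d := le_self_pow₀ h1 (by omega)
      _ = (volume I.carrier).toReal := by
          rw [I.volume_eq, ENNReal.toReal_pow, ENNReal.toReal_ofReal I.side_pos.le]
      _ ≤ _ := ENNReal.toReal_mono (ENNReal.div_ne_top hG ht) h2
  obtain ⟨u, huT, hdisj, hcov⟩ := Vitali.exists_disjoint_subfamily_covering_enlargement
    (fun I : Cube d => I.carrier) T (fun I => I.side) 2 (by norm_num)
    (fun I _ => I.side_pos.le) _ hbound (fun I _ => ⟨_, I.center_mem⟩)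
  have hcount : u.Countable :=
    hdisj.countable_of_nonempty_interior fun I _ => I.interior_nonempty
  have hsub : {x | t < cubeMaximal g x} ⊆ ⋃ I ∈ u, I.fivefold.carrier := by
    intro x hx
    simp only [mem_ofPred_eq, cubeMaximal, lt_iSup_iff] at hx
    obtain ⟨I, hxI, hI⟩ := hx
    have hIT : I ∈ T := by
      change t * volume I.carrier ≤ ∫⁻ y in I.carrier, g y
      rw [← ENNReal.le_div_iff_mul_le (Or.inl I.volume_ne_zero) (Or.inl I.volume_ne_top),
        ENNReal.div_eq_inv_mul]
      exact hI.le
    obtain ⟨J, hJ, hne, hs⟩ := hcov I hIT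
    exact mem_biUnion hJ (Cube.subset_fivefold hne hs hxI)
  calc t * volume {x | t < cubeMaximal g x}
      ≤ t * ∑' I : u, volume (I : Cube d).fivefold.carrier := by
        gcongr
        exact (measure_mono hsub).trans (measure_biUnion_le _ hcount _)
    _ = 5 ^ d * ∑' I : u, t * volume (I : Cube d).carrier := by
        simp_rw [Cube.volume_fivefold]
        rw [ENNReal.tsum_mul_left, ENNReal.tsum_mul_left]
        ring
    _ ≤ 5 ^ d * ∑' I : u, ∫⁻ y in (I : Cube d).carrier, g y := by
        gcongr with I
        exact huT I.2
    _ = 5 ^ d * ∫⁻ y in ⋃ I ∈ u, (I : Cube d).carrier, g y := by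
        rw [lintegral_biUnion hcount (fun I _ => I.measurableSet) hdisj]
    _ ≤ _ := by
        gcongr 5 ^ d * ?_
        exact setLIntegral_le_lintegral _ _

/-- Only the part of `g` above height `t / 2` matters for the level set `{M g > t}`. -/
lemma cubeMaximal_weak_trunc (hd : 1 ≤ d) {g : Euc d → ℝ≥0∞} (hg : Measurable g) {t : ℝ≥0∞}
    (ht : t ≠ 0) (ht' : t ≠ ∞) :
    t * volume {x | t < cubeMaximal g x} ≤ 2 * 5 ^ d * ∫⁻ x in {x | t < 2 * g x}, g x := by
  set E : Set (Euc d) := {x | t < 2 * g x} with hE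
  have hEm : MeasurableSet E := measurableSet_lt measurable_const (hg.const_mul 2)
  have hhalf : t / 2 ≠ 0 := by simp [ht]
  have hhalf' : t / 2 ≠ ∞ := ENNReal.div_ne_top ht' (by norm_num)
  have hM : ∀ x, cubeMaximal g x ≤ t / 2 + cubeMaximal (E.indicator g) x := by
    intro x
    refine iSup₂_le fun I hI => ?_
    have hpt : ∀ y, g y ≤ t / 2 + E.indicator g y := by
      intro y
      by_cases hy : y ∈ E
      · rw [indicator_of_mem hy]; exact le_add_self
      · rw [indicator_of_notMem hy, add_zero]
        rw [ENNReal.le_div_iff_mul_le (by simp) (by simp), mul_comm]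
        exact not_lt.1 hy
    calc (volume I.carrier)⁻¹ * ∫⁻ y in I.carrier, g y
        ≤ (volume I.carrier)⁻¹ * ∫⁻ y in I.carrier, (t / 2 + E.indicator g y) := by
          gcongr with y; exact hpt y
      _ = t / 2 + (volume I.carrier)⁻¹ * ∫⁻ y in I.carrier, E.indicator g y := by
          rw [lintegral_add_left measurable_const, setLIntegral_const, mul_add, mul_comm (t / 2),
            ← mul_assoc, ENNReal.inv_mul_cancel I.volume_ne_zero I.volume_ne_top, one_mul]
      _ ≤ _ := by
          gcongr
          exact le_iSup₂ (f := fun (I : Cube d) (_ : x ∈ I.carrier) =>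
            (volume I.carrier)⁻¹ * ∫⁻ y in I.carrier, E.indicator g y) I hI
  have hsub : {x | t < cubeMaximal g x} ⊆ {x | t / 2 < cubeMaximal (E.indicator g) x} := by
    intro x hx
    by_contra hcon
    have h1 : cubeMaximal g x ≤ t / 2 + t / 2 :=
      (hM x).trans (by gcongr; exact not_lt.1 hcon)
    rw [ENNReal.add_halves] at h1
    exact absurd hx (not_lt.2 h1)
  calc t * volume {x | t < cubeMaximal g x}
      ≤ t * volume {x | t / 2 < cubeMaximal (E.indicator g) x} := by
        gcongr t * ?_
        exact measure_mono hsub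
    _ = 2 * (t / 2 * volume {x | t / 2 < cubeMaximal (E.indicator g) x}) := by
        rw [← mul_assoc, ENNReal.mul_div_cancel (by norm_num) (by norm_num)]
    _ ≤ 2 * (5 ^ d * ∫⁻ x, E.indicator g x) := by
        gcongr 2 * ?_
        exact cubeMaximal_weak hd _ hhalf hhalf'
    _ = _ := by rw [lintegral_indicator hEm, mul_assoc]

/-- The constant of the strong type `(r,r)` bound. -/
def hlConst (d : ℕ) (r : ℝ) : ℝ≥0∞ := 2 ^ r * (2 * 5 ^ d * (geomConst (r - 1) * 2 ^ (r - 1)))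

lemma hlConst_ne_top (d : ℕ) {r : ℝ} (hr : 1 < r) : hlConst d r ≠ ∞ := by
  have h1 := geomConst_ne_top (s := r - 1) (by linarith)
  have h2 : (2 : ℝ≥0∞) ^ r ≠ ∞ := ENNReal.rpow_ne_top_of_nonneg (by linarith) (by norm_num)
  have h3 : (2 : ℝ≥0∞) ^ (r - 1) ≠ ∞ := ENNReal.rpow_ne_top_of_nonneg (by linarith) (by norm_num)
  have h4 : (5 : ℝ≥0∞) ^ d ≠ ∞ := ENNReal.pow_ne_top (by norm_num)
  unfold hlConst
  finiteness

/-- Strong type `(r,r)`, by summing `cubeMaximal_weak_trunc` over dyadic heights. -/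
lemma cubeMaximal_strong (hd : 1 ≤ d) {r : ℝ} (hr : 1 < r) {g : Euc d → ℝ≥0∞}
    (hg : Measurable g) :
    ∫⁻ x, cubeMaximal g x ^ r ≤ hlConst d r * ∫⁻ x, g x ^ r := by
  have hr1 : 0 < r - 1 := by linarith
  have h2k : ∀ k : ℤ, (2 : ℝ≥0∞) ^ k ≠ 0 := fun k =>
    (ENNReal.zpow_pos (by norm_num) (by norm_num) k).ne'
  have h2k' : ∀ k : ℤ, (2 : ℝ≥0∞) ^ k ≠ ∞ := fun k =>
    (ENNReal.zpow_lt_top (by norm_num) (by norm_num) k).ne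
  have hmeas : ∀ k : ℤ, MeasurableSet {x | (2 : ℝ≥0∞) ^ k < 2 * g x} := fun k =>
    measurableSet_lt measurable_const (hg.const_mul 2)
  calc ∫⁻ x, cubeMaximal g x ^ r
      ≤ 2 ^ r * ∑' k : ℤ, ((2 : ℝ≥0∞) ^ k) ^ r *
          volume {x | (2 : ℝ≥0∞) ^ k < cubeMaximal g x} :=
        lintegral_rpow_le_layer (by linarith) _
    _ ≤ 2 ^ r * ∑' k : ℤ, 2 * 5 ^ d *
          ∫⁻ x, g x * (if (2 : ℝ≥0∞) ^ k < 2 * g x then ((2 : ℝ≥0∞) ^ k) ^ (r - 1) else 0) := by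
        gcongr 2 ^ r * ?_
        refine ENNReal.tsum_le_tsum fun k => ?_
        have hsplit : ((2 : ℝ≥0∞) ^ k) ^ r = ((2 : ℝ≥0∞) ^ k) ^ (r - 1) * (2 : ℝ≥0∞) ^ k := by
          conv_rhs => rw [← ENNReal.rpow_one ((2 : ℝ≥0∞) ^ k), ← ENNReal.rpow_mul, one_mul]
          rw [← ENNReal.rpow_add _ _ (h2k k) (h2k' k)]
          congr 1; ring
        rw [hsplit, mul_assoc]
        calc ((2 : ℝ≥0∞) ^ k) ^ (r - 1) *
              ((2 : ℝ≥0∞) ^ k * volume {x | (2 : ℝ≥0∞) ^ k < cubeMaximal g x})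
            ≤ ((2 : ℝ≥0∞) ^ k) ^ (r - 1) *
                (2 * 5 ^ d * ∫⁻ x in {x | (2 : ℝ≥0∞) ^ k < 2 * g x}, g x) := by
              gcongr _ * ?_
              exact cubeMaximal_weak_trunc hd hg (h2k k) (h2k' k)
          _ = 2 * 5 ^ d * ∫⁻ x, g x *
                (if (2 : ℝ≥0∞) ^ k < 2 * g x then ((2 : ℝ≥0∞) ^ k) ^ (r - 1) else 0) := by
              rw [mul_left_comm, ← lintegral_indicator (hmeas k),
                ← lintegral_const_mul _ (hg.indicator (hmeas k))]
              congr 1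
              refine lintegral_congr fun x => ?_
              simp only [indicator_apply, mem_ofPred_eq]
              split_ifs
              · rw [mul_comm]
              · simp
    _ = 2 ^ r * (2 * 5 ^ d * ∫⁻ x, g x *
          ∑' k : ℤ, (if (2 : ℝ≥0∞) ^ k < 2 * g x then ((2 : ℝ≥0∞) ^ k) ^ (r - 1) else 0)) := by
        rw [ENNReal.tsum_mul_left, ← lintegral_tsum]
        · simp_rw [ENNReal.tsum_mul_left]
        · intro k
          exact (hg.mul (Measurable.ite (hmeas k) measurable_const measurable_const)).aemeasurable
    _ ≤ 2 ^ r * (2 * 5 ^ d * ∫⁻ x, g x * (geomConst (r - 1) * (2 * g x) ^ (r - 1))) := by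
        gcongr with x
        exact layer_le_rpow hr1 _
    _ = hlConst d r * ∫⁻ x, g x ^ r := by
        have : ∀ x, g x * (geomConst (r - 1) * (2 * g x) ^ (r - 1)) =
            (geomConst (r - 1) * 2 ^ (r - 1)) * g x ^ r := by
          intro x
          have h1 : g x ^ r = g x * g x ^ (r - 1) := by
            conv_lhs => rw [show r = 1 + (r - 1) by ring,
              ENNReal.rpow_add_of_nonneg _ _ zero_le_one hr1.le, ENNReal.rpow_one]
          rw [h1, ENNReal.mul_rpow_of_nonneg _ _ hr1.le]
          ring
        simp_rw [this]
        rw [lintegral_const_mul _ (hg.pow_const r), hlConst]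
        ring

end Maximal

/-! ### The sharp function inequality for a nested grid -/

/-- A nested sequence of measurable partitions into sets of positive finite measure.
`idx n x` labels the cell of generation `n` that contains `x`, and each cell has measure at most
`D` times that of any of its children. -/
structure Grid {X : Type*} [MeasurableSpace X] (ι : Type*) (μ : Measure X) (D : ℝ≥0∞) where
  idx : ℕ → X → ι
  meas : ∀ n i, MeasurableSet (idx n ⁻¹' {i})
  nested : ∀ n x y, idx (n + 1) x = idx (n + 1) y → idx n x = idx n y
  ne_zero : ∀ n x, μ (idx n ⁻¹' {idx n x}) ≠ 0
  ne_top : ∀ n x, μ (idx n ⁻¹' {idx n x}) ≠ ∞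
  doubling : ∀ n x, μ (idx n ⁻¹' {idx n x}) ≤ D * μ (idx (n + 1) ⁻¹' {idx (n + 1) x})

lemma measure_mul_enorm_setAverage_sub_le {X : Type*} [MeasurableSpace X] {μ : Measure X}
    {s : Set X} (hs : μ s ≠ ∞) {f : X → ℂ} (hf : IntegrableOn f s μ) (c : ℂ) :
    μ s * ‖(⨍ y in s, f y ∂μ) - c‖ₑ ≤ ∫⁻ y in s, ‖f y - c‖ₑ ∂μ := by
  have h1 : ∫ y in s, (f y - c) ∂μ = μ.real s • ((⨍ y in s, f y ∂μ) - c) := by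
    rw [integral_sub hf (integrableOn_const hs), smul_sub, measure_smul_setAverage _ hs,
      setIntegral_const]
  have h2 := enorm_integral_le_lintegral_enorm (μ := μ.restrict s) (fun y => f y - c)
  rw [h1, enorm_smul, Real.enorm_eq_ofReal measureReal_nonneg, measureReal_def,
    ENNReal.ofReal_toReal hs] at h2
  exact h2

namespace Grid
variable {X ι : Type*} [MeasurableSpace X] {μ : Measure X} {D : ℝ≥0∞}
  (G : Grid ι μ D)

/-- The cell of generation `n` containing `x`. -/
def cell (n : ℕ) (x : X) : Set X := G.idx n ⁻¹' {G.idx n x}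

lemma mem_cell {n : ℕ} {x y : X} : y ∈ G.cell n x ↔ G.idx n y = G.idx n x := Iff.rfl

lemma self_mem_cell (n : ℕ) (x : X) : x ∈ G.cell n x := rfl

lemma cell_eq {n : ℕ} {x y : X} (h : y ∈ G.cell n x) : G.cell n y = G.cell n x := by
  unfold cell; rw [G.mem_cell.1 h]

lemma measurableSet_cell (n : ℕ) (x : X) : MeasurableSet (G.cell n x) := G.meas n _

lemma idx_eq_of_le {m n : ℕ} (hmn : m ≤ n) {x y : X} (h : G.idx n x = G.idx n y) :
    G.idx m x = G.idx m y := by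
  induction n, hmn using Nat.le_induction with
  | base => exact h
  | succ n _ ih => exact ih (G.nested n x y h)

lemma cell_subset {m n : ℕ} (hmn : m ≤ n) (x : X) : G.cell n x ⊆ G.cell m x :=
  fun _ hy => G.idx_eq_of_le hmn hy

/-- `E` is a union of cells of generation `n`. -/
def Sat (n : ℕ) (E : Set X) : Prop := ∀ x ∈ E, G.cell n x ⊆ E

variable {G}

lemma Sat.eq_iUnion {n : ℕ} {E : Set X} (hE : G.Sat n E) :
    E = ⋃ i ∈ G.idx n '' E, G.idx n ⁻¹' {i} := by
  ext y
  simp only [mem_iUnion, mem_image, exists_prop, mem_preimage, mem_singleton_iff]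
  constructor
  · exact fun hy => ⟨_, ⟨y, hy, rfl⟩, rfl⟩
  · rintro ⟨i, ⟨x, hx, rfl⟩, hy⟩
    exact hE x hx hy

lemma Sat.mono {m n : ℕ} (hmn : m ≤ n) {E : Set X} (hE : G.Sat m E) : G.Sat n E :=
  fun x hx => (G.cell_subset hmn x).trans (hE x hx)

lemma Sat.measurableSet [Countable ι] {n : ℕ} {E : Set X} (hE : G.Sat n E) :
    MeasurableSet E := by
  rw [hE.eq_iUnion]
  exact MeasurableSet.biUnion (to_countable _) fun i _ => G.meas n i

lemma Sat.measure_le [Countable ι] {n : ℕ} {E : Set X} (hE : G.Sat n E) {μ₁ μ₂ : Measure X}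
    (h : ∀ x ∈ E, μ₁ (G.cell n x) ≤ μ₂ (G.cell n x)) : μ₁ E ≤ μ₂ E := by
  rw [hE.eq_iUnion]
  have hd : (G.idx n '' E).PairwiseDisjoint fun i => G.idx n ⁻¹' {i} := by
    intro i _ j _ hij
    exact Disjoint.preimage _ (by simpa using hij)
  rw [measure_biUnion (to_countable _) hd fun i _ => G.meas n i,
    measure_biUnion (to_countable _) hd fun i _ => G.meas n i]
  refine ENNReal.tsum_le_tsum ?_
  rintro ⟨i, x, hx, rfl⟩
  exact h x hx

lemma measurable_of_const [Countable ι] {β : Type*} [MeasurableSpace β] (n : ℕ) {g : X → β}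
    (hg : ∀ x y, G.idx n x = G.idx n y → g x = g y) : Measurable g := by
  intro B _
  refine Sat.measurableSet (G := G) (n := n) fun x hx y hy => ?_
  rw [mem_preimage, hg y x hy]
  exact hx

/-- A stopping-time argument: to compare two measures on the set where one of the events
`A 0, A 1, …` occurs, where `A j` is decided at generation `n + j`, it suffices to compare them
on the cells at which an event occurs for the first time. -/
lemma stopping [Countable ι] {n : ℕ} {P : Set X} (hP : G.Sat n P) {A : ℕ → Set X}
    (hA : ∀ j, G.Sat (n + j) (A j)) {μ₁ μ₂ : Measure X}
    (h : ∀ j, ∀ y ∈ P, y ∈ A j → (∀ i < j, y ∉ A i) →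
      μ₁ (G.cell (n + j) y) ≤ μ₂ (G.cell (n + j) y)) :
    μ₁ (P ∩ ⋃ j, A j) ≤ μ₂ (P ∩ ⋃ j, A j) := by
  classical
  set E : ℕ → Set X := fun j => {y | y ∈ P ∧ y ∈ A j ∧ ∀ i < j, y ∉ A i} with hEdef
  have hsat : ∀ j, G.Sat (n + j) (E j) := by
    rintro j x ⟨hxP, hxA, hxn⟩ y hy
    refine ⟨hP x hxP (G.cell_subset (Nat.le_add_right n j) x hy), hA j x hxA hy, ?_⟩
    intro i hi hyA
    refine hxn i hi (hA i y hyA ?_)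
    exact (G.idx_eq_of_le (by omega) hy).symm
  have hunion : P ∩ ⋃ j, A j = ⋃ j, E j := by
    ext y
    simp only [mem_inter_iff, mem_iUnion]
    constructor
    · rintro ⟨hyP, hex⟩
      exact ⟨Nat.find hex, hyP, Nat.find_spec hex, fun i hi => Nat.find_min hex hi⟩
    · rintro ⟨j, hyP, hyA, _⟩
      exact ⟨hyP, j, hyA⟩
  have hdisj : Pairwise (Function.onFun Disjoint E) := by
    intro i j hij
    refine Set.disjoint_left.2 fun y hyi hyj => ?_
    rcases lt_or_gt_of_ne hij with hlt | hlt
    · exact hyj.2.2 i hlt hyi.2.1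
    · exact hyi.2.2 j hlt hyj.2.1
  rw [hunion, measure_iUnion hdisj fun j => (hsat j).measurableSet,
    measure_iUnion hdisj fun j => (hsat j).measurableSet]
  exact ENNReal.tsum_le_tsum fun j => (hsat j).measure_le fun x hx => h j x hx.1 hx.2.1 hx.2.2

variable (G)

/-- The average of `f` over the cell of generation `n` containing `x`. -/
def avg (f : X → ℂ) (n : ℕ) (x : X) : ℂ := ⨍ y in G.cell n x, f y ∂μ

/-- The mean oscillation of `f` over the cell of generation `n` containing `x`. -/
def osc (f : X → ℂ) (n : ℕ) (x : X) : ℝ≥0∞ :=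
  (μ (G.cell n x))⁻¹ * ∫⁻ y in G.cell n x, ‖f y - G.avg f n x‖ₑ ∂μ

/-- The sharp maximal function of `f` along the grid. -/
def sharp (f : X → ℂ) (x : X) : ℝ≥0∞ := ⨆ n, G.osc f n x

/-- The maximal function of the averages of `f - c` along the grid. -/
def maxi (f : X → ℂ) (c : ℂ) (x : X) : ℝ≥0∞ := ⨆ n, ‖G.avg f n x - c‖ₑ

variable {f : X → ℂ}

lemma avg_congr {n : ℕ} {x y : X} (h : G.idx n x = G.idx n y) : G.avg f n x = G.avg f n y := by
  unfold avg; rw [G.cell_eq (x := y) (y := x) h]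

lemma osc_congr {n : ℕ} {x y : X} (h : G.idx n x = G.idx n y) : G.osc f n x = G.osc f n y := by
  unfold osc; rw [G.cell_eq (x := y) (y := x) h, G.avg_congr h]

lemma measurable_avg [Countable ι] (n : ℕ) : Measurable (G.avg f n) :=
  measurable_of_const (G := G) n fun _ _ => G.avg_congr

lemma measurable_sharp [Countable ι] : Measurable (G.sharp f) :=
  Measurable.iSup fun n => measurable_of_const (G := G) n fun _ _ => G.osc_congr

lemma measurable_maxi [Countable ι] (c : ℂ) : Measurable (G.maxi f c) :=
  Measurable.iSup fun n => ((G.measurable_avg n).sub_const c).enorm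

lemma lintegral_eq_mul_osc (n : ℕ) (x : X) :
    ∫⁻ y in G.cell n x, ‖f y - G.avg f n x‖ₑ ∂μ = μ (G.cell n x) * G.osc f n x := by
  have h0 : μ (G.cell n x) ≠ 0 := G.ne_zero n x
  have ht : μ (G.cell n x) ≠ ∞ := G.ne_top n x
  rw [osc, ← mul_assoc, ENNReal.mul_inv_cancel h0 ht, one_mul]

lemma enorm_avg_succ_sub (hf : ∀ n x, IntegrableOn f (G.cell n x) μ) (n : ℕ) (x : X) :
    ‖G.avg f (n + 1) x - G.avg f n x‖ₑ ≤ D * G.osc f n x := by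
  have h0 : μ (G.cell (n + 1) x) ≠ 0 := G.ne_zero _ _
  have ht : μ (G.cell (n + 1) x) ≠ ∞ := G.ne_top _ _
  rw [← ENNReal.mul_le_mul_iff_right h0 ht]
  calc μ (G.cell (n + 1) x) * ‖G.avg f (n + 1) x - G.avg f n x‖ₑ
      ≤ ∫⁻ y in G.cell (n + 1) x, ‖f y - G.avg f n x‖ₑ ∂μ :=
        measure_mul_enorm_setAverage_sub_le ht (hf _ _) _
    _ ≤ ∫⁻ y in G.cell n x, ‖f y - G.avg f n x‖ₑ ∂μ :=
        lintegral_mono_set (G.cell_subset (Nat.le_succ n) x)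
    _ = μ (G.cell n x) * G.osc f n x := G.lintegral_eq_mul_osc n x
    _ ≤ (D * μ (G.cell (n + 1) x)) * G.osc f n x := by
        gcongr
        exact G.doubling n x
    _ = μ (G.cell (n + 1) x) * (D * G.osc f n x) := by ring

/-- Weak type `(1,1)` bound for the maximal function of averages inside one cell. -/
lemma weak [Countable ι] (hf : ∀ n x, IntegrableOn f (G.cell n x) μ) (n : ℕ) (x : X) (c : ℂ)
    (t : ℝ≥0∞) :
    t * μ (G.cell n x ∩ ⋃ j, {y | t < ‖G.avg f (n + j) y - c‖ₑ})
      ≤ ∫⁻ y in G.cell n x, ‖f y - c‖ₑ ∂μ := by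
  have hsat : G.Sat n (G.cell n x) := fun y hy => (G.cell_eq hy).subset
  have hA : ∀ j, G.Sat (n + j) {y | t < ‖G.avg f (n + j) y - c‖ₑ} := by
    intro j y hy z hz
    change t < ‖G.avg f (n + j) z - c‖ₑ
    rw [G.avg_congr (G.mem_cell.1 hz)]
    exact hy
  have hmeas : MeasurableSet (G.cell n x ∩ ⋃ j, {y | t < ‖G.avg f (n + j) y - c‖ₑ}) :=
    (G.measurableSet_cell n x).inter (MeasurableSet.iUnion fun j => (hA j).measurableSet)
  have := stopping (G := G) hsat hA (μ₁ := t • μ) (μ₂ := μ.withDensity fun y => ‖f y - c‖ₑ) ?_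
  · rw [withDensity_apply _ hmeas] at this
    simp only [Measure.smul_apply, smul_eq_mul] at this
    exact this.trans (lintegral_mono_set inter_subset_left)
  · intro j y _ hy _
    rw [withDensity_apply _ (G.measurableSet_cell _ _)]
    simp only [Measure.smul_apply, smul_eq_mul]
    refine le_trans ?_ (measure_mul_enorm_setAverage_sub_le (G.ne_top _ _) (hf (n + j) y) c)
    rw [mul_comm]
    exact mul_le_mul' le_rfl (le_of_lt hy)

/-- The good-`λ` inequality. -/
lemma good_lambda [Countable ι] (hf : ∀ n x, IntegrableOn f (G.cell n x) μ) (x₀ : X)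
    {γ t : ℝ≥0∞} (hγ : D * γ ≤ 2⁻¹) (ht : t ≠ 0) (ht' : t ≠ ∞) :
    μ (G.cell 0 x₀ ∩ {y | 2 * t < G.maxi f (G.avg f 0 x₀) y ∧ G.sharp f y ≤ γ * t})
      ≤ 2 * γ * μ (G.cell 0 x₀ ∩ {y | t < G.maxi f (G.avg f 0 x₀) y}) := by
  set c₀ := G.avg f 0 x₀ with hc₀
  set B : Set X := {y | 2 * t < G.maxi f c₀ y ∧ G.sharp f y ≤ γ * t} with hB
  have hBm : MeasurableSet B :=
    (measurableSet_lt measurable_const (G.measurable_maxi c₀)).inter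
      (measurableSet_le G.measurable_sharp measurable_const)
  have hunion : {y | t < G.maxi f c₀ y} = ⋃ j, {y | t < ‖G.avg f (0 + j) y - c₀‖ₑ} := by
    ext y; simp [maxi, lt_iSup_iff]
  have hBsub : B ⊆ {y | t < G.maxi f c₀ y} := by
    rintro y ⟨hy, _⟩
    refine lt_of_le_of_lt ?_ hy
    rw [two_mul]; exact le_self_add
  have hsat : G.Sat 0 (G.cell 0 x₀) := fun y hy => (G.cell_eq hy).subset
  have hA : ∀ j, G.Sat (0 + j) {y | t < ‖G.avg f (0 + j) y - c₀‖ₑ} := by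
    intro j y hy z hz
    change t < ‖G.avg f (0 + j) z - c₀‖ₑ
    rw [G.avg_congr (G.mem_cell.1 hz)]
    exact hy
  have key := stopping (G := G) hsat hA (μ₁ := μ.restrict B) (μ₂ := (2 * γ) • μ) ?_
  · rw [← hunion, Measure.restrict_apply' hBm] at key
    simp only [Measure.smul_apply, smul_eq_mul] at key
    refine le_trans (measure_mono ?_) key
    exact fun y hy => ⟨⟨hy.1, hBsub hy.2⟩, hy.2⟩
  · intro j y hyP hyA hyn
    simp only [zero_add, mem_ofPred_eq, not_lt] at hyA hyn ⊢
    rw [Measure.restrict_apply' hBm]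
    simp only [Measure.smul_apply, smul_eq_mul]
    rcases (G.cell j y ∩ B).eq_empty_or_nonempty with he | ⟨w, hwy, hwB⟩
    · rw [he]; simp
    rcases j with _ | k
    · exfalso
      rw [G.avg_congr (G.mem_cell.1 hyP), ← hc₀, sub_self, enorm_zero] at hyA
      exact ENNReal.not_lt_zero hyA
    rw [← G.cell_eq hwy]
    set c := G.avg f (k + 1) w with hc
    have hyw : ∀ m ≤ k + 1, G.idx m w = G.idx m y := fun m hm => G.idx_eq_of_le hm hwy
    have hosc : ∀ m, G.osc f m w ≤ γ * t := fun m => (le_iSup _ m).trans hwB.2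
    have hcc : ‖c - c₀‖ₑ ≤ 2⁻¹ * t + t := by
      calc ‖c - c₀‖ₑ = ‖(c - G.avg f k w) + (G.avg f k w - c₀)‖ₑ := by ring_nf
        _ ≤ ‖c - G.avg f k w‖ₑ + ‖G.avg f k w - c₀‖ₑ := enorm_add_le _ _
        _ ≤ D * (γ * t) + t := by
            gcongr
            · exact (G.enorm_avg_succ_sub hf k w).trans (by gcongr; exact hosc k)
            · rw [G.avg_congr (hyw k (by omega))]
              exact hyn k (by omega)
        _ ≤ _ := by
            rw [← mul_assoc]; gcongr
    have hsub : G.cell (k + 1) w ∩ B ⊆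
        G.cell (k + 1) w ∩ ⋃ j, {z | 2⁻¹ * t < ‖G.avg f (k + 1 + j) z - c‖ₑ} := by
      rintro z ⟨hzw, hzB⟩
      refine ⟨hzw, ?_⟩
      obtain ⟨m, hm⟩ := lt_iSup_iff.1 hzB.1
      have hmk : k + 1 ≤ m := by
        by_contra hcon
        have hmk : m < k + 1 := not_le.1 hcon
        have h1 : G.avg f m z = G.avg f m y :=
          G.avg_congr ((G.idx_eq_of_le hmk.le hzw).trans (hyw m hmk.le))
        rw [h1] at hm
        have h2 := hm.trans_le (hyn m hmk)
        rw [two_mul] at h2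
        exact absurd h2 (not_lt.2 le_self_add)
      obtain ⟨j, rfl⟩ := Nat.exists_eq_add_of_le hmk
      refine mem_iUnion.2 ⟨j, ?_⟩
      change 2⁻¹ * t < ‖G.avg f (k + 1 + j) z - c‖ₑ
      by_contra hcon
      have h3 : ‖G.avg f (k + 1 + j) z - c₀‖ₑ ≤ 2 * t := by
        calc ‖G.avg f (k + 1 + j) z - c₀‖ₑ
            = ‖(G.avg f (k + 1 + j) z - c) + (c - c₀)‖ₑ := by ring_nf
          _ ≤ ‖G.avg f (k + 1 + j) z - c‖ₑ + ‖c - c₀‖ₑ := enorm_add_le _ _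
          _ ≤ 2⁻¹ * t + (2⁻¹ * t + t) := add_le_add (not_lt.1 hcon) hcc
          _ = 2 * t := by
              rw [← add_assoc, ← add_mul, ENNReal.inv_two_add_inv_two, one_mul, two_mul]
      exact absurd hm (not_lt.2 h3)
    have h2 : 2⁻¹ * t ≠ 0 := by simp [ht]
    have h2' : 2⁻¹ * t ≠ ∞ := ENNReal.mul_ne_top (by simp) ht'
    rw [← ENNReal.mul_le_mul_iff_right h2 h2']
    calc 2⁻¹ * t * μ (G.cell (k + 1) w ∩ B)
        ≤ 2⁻¹ * t * μ (G.cell (k + 1) w ∩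
            ⋃ j, {z | 2⁻¹ * t < ‖G.avg f (k + 1 + j) z - c‖ₑ}) := by
          gcongr 2⁻¹ * t * ?_
          exact measure_mono hsub
      _ ≤ ∫⁻ z in G.cell (k + 1) w, ‖f z - c‖ₑ ∂μ := G.weak hf _ _ _ _
      _ = μ (G.cell (k + 1) w) * G.osc f (k + 1) w := G.lintegral_eq_mul_osc _ _
      _ ≤ μ (G.cell (k + 1) w) * (γ * t) := by gcongr; exact hosc _
      _ = (2⁻¹ * 2) * (μ (G.cell (k + 1) w) * (γ * t)) := by
          rw [ENNReal.inv_mul_cancel (by norm_num) (by norm_num), one_mul]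
      _ = 2⁻¹ * t * (2 * γ * μ (G.cell (k + 1) w)) := by ring

end Grid

/-! ### The local Fefferman–Stein inequality -/

/-- The parameter `γ` of the good-`λ` inequality, small enough both for the inequality to hold and
for its first term to be absorbed. -/
def gammaConst (D : ℝ≥0∞) (r : ℝ) : ℝ≥0∞ := min (2 * D)⁻¹ (4 * 2 ^ r)⁻¹

/-- The constant of the sharp function inequality on a grid. -/
def gridConst (D : ℝ≥0∞) (r : ℝ) : ℝ≥0∞ :=
  2 ^ r * (2 * (2 ^ r * (geomConst r * (gammaConst D r)⁻¹ ^ r)))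

lemma gammaConst_ne_zero {D : ℝ≥0∞} (hD : D ≠ ∞) {r : ℝ} (hr : 0 < r) : gammaConst D r ≠ 0 := by
  have h2 : (2 : ℝ≥0∞) ^ r ≠ ∞ := ENNReal.rpow_ne_top_of_nonneg hr.le (by norm_num)
  have h3 : (0 : ℝ≥0∞) < (2 * D)⁻¹ := ENNReal.inv_pos.2 (by finiteness)
  have h4 : (0 : ℝ≥0∞) < (4 * 2 ^ r)⁻¹ := ENNReal.inv_pos.2 (by finiteness)
  exact (lt_min h3 h4).ne'

lemma gammaConst_ne_top {D : ℝ≥0∞} {r : ℝ} : gammaConst D r ≠ ∞ := by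
  refine ne_top_of_le_ne_top ?_ (min_le_right _ _)
  simp

lemma gridConst_ne_top {D : ℝ≥0∞} (hD : D ≠ ∞) {r : ℝ} (hr : 0 < r) : gridConst D r ≠ ∞ := by
  have h1 := geomConst_ne_top hr
  have h2 : (2 : ℝ≥0∞) ^ r ≠ ∞ := ENNReal.rpow_ne_top_of_nonneg hr.le (by norm_num)
  have h3 : (gammaConst D r)⁻¹ ^ r ≠ ∞ := ENNReal.rpow_ne_top_of_nonneg hr.le
    (ENNReal.inv_ne_top.2 (gammaConst_ne_zero hD hr))
  unfold gridConst
  finiteness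

namespace Grid
variable {X ι : Type*} [MeasurableSpace X] {μ : Measure X} {D : ℝ≥0∞}
  (G : Grid ι μ D) {f : X → ℂ}

/-- Truncating the maximal function at height `Λ` makes the quantity to be absorbed finite. -/
lemma lintegral_min_maxi_le [Countable ι] (hD : D ≠ ∞)
    (hf : ∀ n x, IntegrableOn f (G.cell n x) μ) (x₀ : X) {r : ℝ} (hr : 0 < r)
    {Λ : ℝ≥0∞} (hΛ : Λ ≠ ∞) :
    ∫⁻ x in G.cell 0 x₀, (min (G.maxi f (G.avg f 0 x₀) x) Λ) ^ r ∂μ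
      ≤ gridConst D r * ∫⁻ x in G.cell 0 x₀, G.sharp f x ^ r ∂μ := by
  set γ := gammaConst D r with hγdef
  have hγ0 : γ ≠ 0 := gammaConst_ne_zero hD hr
  have hγt : γ ≠ ∞ := gammaConst_ne_top
  have h2r : (2 : ℝ≥0∞) ^ r ≠ ∞ := ENNReal.rpow_ne_top_of_nonneg hr.le (by norm_num)
  have h2r0 : (2 : ℝ≥0∞) ^ r ≠ 0 := by simp
  have hγ1 : D * γ ≤ 2⁻¹ := by
    calc D * γ ≤ D * (2 * D)⁻¹ := by gcongr; exact min_le_left _ _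
      _ = 2⁻¹ * (D * D⁻¹) := by
          rw [ENNReal.mul_inv (Or.inl (by norm_num)) (Or.inl (by norm_num))]; ring
      _ ≤ 2⁻¹ * 1 := by gcongr; exact ENNReal.mul_inv_le_one D
      _ = 2⁻¹ := mul_one _
  have hγ2 : 2 ^ r * (2 * γ) ≤ 2⁻¹ := by
    calc 2 ^ r * (2 * γ) ≤ 2 ^ r * (2 * (4 * 2 ^ r)⁻¹) := by gcongr; exact min_le_right _ _
      _ = (2 * 4⁻¹) * (2 ^ r * (2 ^ r)⁻¹) := by
          rw [ENNReal.mul_inv (Or.inl (by norm_num)) (Or.inl (by norm_num))]; ring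
      _ = 2⁻¹ := by
          rw [ENNReal.mul_inv_cancel h2r0 h2r, mul_one, show (4 : ℝ≥0∞) = 2 * 2 by norm_num,
            ENNReal.mul_inv (Or.inl (by norm_num)) (Or.inl (by norm_num)), ← mul_assoc,
            ENNReal.mul_inv_cancel (by norm_num) (by norm_num), one_mul]
  set Q := G.cell 0 x₀ with hQ
  set ν := μ.restrict Q with hν
  have hνt : ν univ ≠ ∞ := by
    rw [hν, Measure.restrict_apply_univ]; exact G.ne_top 0 x₀
  set F : X → ℝ≥0∞ := fun x => min (G.maxi f (G.avg f 0 x₀) x) Λ with hF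
  have hFm : Measurable F := (G.measurable_maxi _).min measurable_const
  set N := ∑' k : ℤ, ((2 : ℝ≥0∞) ^ k) ^ r * ν {x | (2 : ℝ≥0∞) ^ k < F x} with hN
  set T := ∑' k : ℤ, ((2 : ℝ≥0∞) ^ k) ^ r * ν {x | (2 : ℝ≥0∞) ^ k < γ⁻¹ * G.sharp f x} with hT
  have hNfin : N ≠ ∞ := by
    refine ne_top_of_le_ne_top ?_ (layer_le_lintegral_rpow hr hFm)
    refine ENNReal.mul_ne_top (geomConst_ne_top hr) ?_
    have : ∫⁻ x, F x ^ r ∂ν ≤ Λ ^ r * ν univ := by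
      rw [← lintegral_const]
      exact lintegral_mono fun x => ENNReal.rpow_le_rpow (min_le_right _ _) hr.le
    exact ne_top_of_le_ne_top
      (ENNReal.mul_ne_top (ENNReal.rpow_ne_top_of_nonneg hr.le hΛ) hνt) this
  have hlevel : ∀ t : ℝ≥0∞, t ≠ 0 → t ≠ ∞ → ν {x | 2 * t < F x} ≤
      2 * γ * ν {x | t < F x} + ν {x | t < γ⁻¹ * G.sharp f x} := by
    intro t ht ht'
    rcases le_or_gt Λ (2 * t) with hl | hl
    · have : {x | 2 * t < F x} = ∅ := by
        ext x
        simp only [mem_ofPred_eq, mem_empty_iff_false, iff_false, not_lt]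
        exact (min_le_right _ _).trans hl
      rw [this]; simp
    have htΛ : t < Λ := lt_of_le_of_lt (by rw [two_mul]; exact le_self_add) hl
    have hsub : {x | 2 * t < F x} ⊆
        {x | 2 * t < G.maxi f (G.avg f 0 x₀) x ∧ G.sharp f x ≤ γ * t} ∪
          {x | t < γ⁻¹ * G.sharp f x} := by
      intro x hx
      by_cases hs : G.sharp f x ≤ γ * t
      · exact Or.inl ⟨(lt_min_iff.1 hx).1, hs⟩
      · refine Or.inr ?_
        change t < γ⁻¹ * G.sharp f x
        rw [mul_comm, ← div_eq_mul_inv, ENNReal.lt_div_iff_mul_lt (Or.inl hγ0) (Or.inl hγt),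
          mul_comm]
        exact not_le.1 hs
    have heq : {x | t < F x} = {x | t < G.maxi f (G.avg f 0 x₀) x} := by
      ext x
      simp [hF, htΛ]
    have hgl := G.good_lambda hf x₀ hγ1 ht ht'
    refine (measure_mono hsub).trans ((measure_union_le _ _).trans ?_)
    gcongr ?_ + _
    rw [heq, hν, Measure.restrict_apply' (G.measurableSet_cell 0 x₀),
      Measure.restrict_apply' (G.measurableSet_cell 0 x₀), inter_comm, inter_comm _ Q]
    exact hgl
  have hNle : N ≤ 2⁻¹ * N + 2 ^ r * T := by
    calc N = ∑' k : ℤ, ((2 : ℝ≥0∞) ^ (k + 1)) ^ r * ν {x | (2 : ℝ≥0∞) ^ (k + 1) < F x} :=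
          ((Equiv.addRight (1 : ℤ)).tsum_eq
            (fun k : ℤ => ((2 : ℝ≥0∞) ^ k) ^ r * ν {x | (2 : ℝ≥0∞) ^ k < F x})).symm
      _ ≤ ∑' k : ℤ, ((2 ^ r * (2 * γ)) * (((2 : ℝ≥0∞) ^ k) ^ r * ν {x | (2 : ℝ≥0∞) ^ k < F x})
            + 2 ^ r * (((2 : ℝ≥0∞) ^ k) ^ r *
                ν {x | (2 : ℝ≥0∞) ^ k < γ⁻¹ * G.sharp f x})) := by
          refine ENNReal.tsum_le_tsum fun k => ?_
          have hz : (2 : ℝ≥0∞) ^ (k + 1) = 2 * (2 : ℝ≥0∞) ^ k := by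
            rw [ENNReal.zpow_add (by norm_num) (by norm_num), zpow_one, mul_comm]
          rw [hz, ENNReal.mul_rpow_of_nonneg _ _ hr.le]
          calc _ ≤ 2 ^ r * ((2 : ℝ≥0∞) ^ k) ^ r * (2 * γ * ν {x | (2 : ℝ≥0∞) ^ k < F x} +
                ν {x | (2 : ℝ≥0∞) ^ k < γ⁻¹ * G.sharp f x}) := by
                gcongr _ * ?_
                exact hlevel _ (ENNReal.zpow_pos (by norm_num) (by norm_num) k).ne'
                  (ENNReal.zpow_lt_top (by norm_num) (by norm_num) k).ne
            _ = _ := by ring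
      _ = (2 ^ r * (2 * γ)) * N + 2 ^ r * T := by
          rw [ENNReal.tsum_add, ENNReal.tsum_mul_left, ENNReal.tsum_mul_left]
      _ ≤ _ := by gcongr
  have hNT : N ≤ 2 * (2 ^ r * T) := by
    have hhalf : 2⁻¹ * N + 2⁻¹ * N = N := by
      rw [← add_mul, ENNReal.inv_two_add_inv_two, one_mul]
    have h1 : 2⁻¹ * N ≤ 2 ^ r * T := by
      have h2 : 2⁻¹ * N ≠ ∞ := ENNReal.mul_ne_top (by simp) hNfin
      rw [← ENNReal.add_le_add_iff_left h2, hhalf]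
      exact hNle
    calc N = 2 * (2⁻¹ * N) := by rw [two_mul, hhalf]
      _ ≤ _ := by gcongr
  calc ∫⁻ x, F x ^ r ∂ν ≤ 2 ^ r * N := lintegral_rpow_le_layer hr F
    _ ≤ 2 ^ r * (2 * (2 ^ r * T)) := by gcongr
    _ ≤ 2 ^ r * (2 * (2 ^ r * (geomConst r * ∫⁻ x, (γ⁻¹ * G.sharp f x) ^ r ∂ν))) := by
        gcongr
        exact layer_le_lintegral_rpow hr (G.measurable_sharp.const_mul _)
    _ = gridConst D r * ∫⁻ x, G.sharp f x ^ r ∂ν := by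
        simp_rw [ENNReal.mul_rpow_of_nonneg _ _ hr.le]
        rw [lintegral_const_mul _ (G.measurable_sharp.pow_const r), gridConst]
        ring

/-- The local Fefferman–Stein inequality on a cell of generation `0`. -/
lemma lintegral_sub_avg_le [Countable ι] (hD : D ≠ ∞)
    (hf : ∀ n x, IntegrableOn f (G.cell n x) μ)
    (hlim : ∀ᵐ x ∂μ, Filter.Tendsto (fun n => G.avg f n x) Filter.atTop (nhds (f x)))
    (x₀ : X) {r : ℝ} (hr : 0 < r) :
    ∫⁻ x in G.cell 0 x₀, ‖f x - G.avg f 0 x₀‖ₑ ^ r ∂μ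
      ≤ gridConst D r * ∫⁻ x in G.cell 0 x₀, G.sharp f x ^ r ∂μ := by
  set c₀ := G.avg f 0 x₀ with hc₀
  have hmono : Monotone fun (n : ℕ) (x : X) => (min (G.maxi f c₀ x) (n : ℝ≥0∞)) ^ r := by
    intro m n hmn x
    exact ENNReal.rpow_le_rpow (min_le_min le_rfl (by exact_mod_cast hmn)) hr.le
  have hle : ∀ᵐ x ∂(μ.restrict (G.cell 0 x₀)), ‖f x - c₀‖ₑ ^ r ≤
      ⨆ n : ℕ, (min (G.maxi f c₀ x) (n : ℝ≥0∞)) ^ r := by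
    filter_upwards [ae_restrict_of_ae hlim] with x hx
    have h1 : ‖f x - c₀‖ₑ ≤ G.maxi f c₀ x :=
      le_of_tendsto' ((continuous_enorm.tendsto _).comp (hx.sub_const c₀))
        fun n => le_iSup (fun n => ‖G.avg f n x - c₀‖ₑ) n
    refine (ENNReal.rpow_le_rpow h1 hr.le).trans ?_
    have h2 : Filter.Tendsto (fun n : ℕ => (min (G.maxi f c₀ x) (n : ℝ≥0∞)) ^ r) Filter.atTop
        (nhds ((min (G.maxi f c₀ x) ∞) ^ r)) :=
      (ENNReal.continuous_rpow_const.tendsto _).comp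
        (tendsto_const_nhds.min ENNReal.tendsto_nat_nhds_top)
    rw [min_eq_left le_top] at h2
    exact le_of_tendsto' h2 fun n => le_iSup
      (fun n : ℕ => (min (G.maxi f c₀ x) (n : ℝ≥0∞)) ^ r) n
  refine (lintegral_mono_ae hle).trans ?_
  rw [lintegral_iSup (fun n => ((G.measurable_maxi c₀).min measurable_const).pow_const r) hmono]
  exact iSup_le fun n => G.lintegral_min_maxi_le hD hf x₀ hr (ENNReal.natCast_ne_top n)

end Grid

/-! ### The dyadic grid -/

section Dyadic
variable {d : ℕ}

lemma floor_half_congr {z w : ℝ} (h : ⌊z⌋ = ⌊w⌋) : ⌊z / 2⌋ = ⌊w / 2⌋ := by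
  have key : ∀ z w : ℝ, ⌊z⌋ = ⌊w⌋ → ⌊z / 2⌋ ≤ ⌊w / 2⌋ := by
    intro z w h
    rw [Int.le_floor, le_div_iff₀ two_pos]
    have h1 : (⌊z / 2⌋ : ℝ) * 2 ≤ z := (le_div_iff₀ two_pos).1 (Int.floor_le _)
    have h2 : ⌊z / 2⌋ * 2 ≤ ⌊w⌋ := by
      rw [← h, Int.le_floor]; exact_mod_cast h1
    have h3 : ((⌊z / 2⌋ * 2 : ℤ) : ℝ) ≤ w := Int.le_floor.1 h2
    exact_mod_cast h3
  exact le_antisymm (key z w h) (key w z h.symm)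

/-- The side length of the dyadic cubes of generation `n` inside `[-a, a)^d`. -/
def dySide (a : ℝ) (n : ℕ) : ℝ := 2 * a / 2 ^ n

lemma dySide_pos {a : ℝ} (ha : 0 < a) (n : ℕ) : 0 < dySide a n := by
  unfold dySide; positivity

lemma dySide_succ (a : ℝ) (n : ℕ) : dySide a n = 2 * dySide a (n + 1) := by
  unfold dySide; rw [pow_succ]; field_simp

/-- The label of the dyadic cube of generation `n` containing `x`. -/
def dyIdx (a : ℝ) (n : ℕ) (x : Euc d) : Fin d → ℤ := fun i => ⌊(x i + a) / dySide a n⌋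

lemma dyIdx_preimage {a : ℝ} (ha : 0 < a) (n : ℕ) (k : Fin d → ℤ) :
    dyIdx a n ⁻¹' {k} = (WithLp.ofLp : Euc d → Fin d → ℝ) ⁻¹'
      univ.pi fun i => Ico (k i * dySide a n - a) (k i * dySide a n - a + dySide a n) := by
  have hh := dySide_pos ha n
  ext x
  simp only [mem_preimage, mem_singleton_iff, funext_iff, dyIdx, mem_univ_pi, mem_Ico]
  refine forall_congr' fun i => ?_
  rw [Int.floor_eq_iff, le_div_iff₀ hh, div_lt_iff₀ hh]
  constructor
  · rintro ⟨h1, h2⟩; constructor <;> linarith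
  · rintro ⟨h1, h2⟩; constructor <;> linarith

lemma dyIdx_volume {a : ℝ} (ha : 0 < a) (n : ℕ) (k : Fin d → ℤ) :
    volume (dyIdx a n ⁻¹' {k} : Set (Euc d)) = ENNReal.ofReal (dySide a n) ^ d := by
  rw [dyIdx_preimage ha, (PiLp.volume_preserving_ofLp (Fin d)).measure_preimage
    (MeasurableSet.univ_pi fun i => measurableSet_Ico).nullMeasurableSet, volume_pi_pi]
  simp [Real.volume_Ico]

/-- The dyadic subdivisions of `[-a, a)^d` and its translates by `2aℤ^d`. -/
def dyGrid (d : ℕ) {a : ℝ} (ha : 0 < a) :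
    Grid (Fin d → ℤ) (volume : Measure (Euc d)) (2 ^ d) where
  idx := dyIdx a
  meas n k := by
    rw [dyIdx_preimage ha]
    exact (PiLp.volume_preserving_ofLp (Fin d)).measurable
      (MeasurableSet.univ_pi fun i => measurableSet_Ico)
  nested n x y h := by
    funext i
    have h1 := floor_half_congr (congrFun h i)
    simp only [dyIdx]
    rw [dySide_succ, mul_comm, ← div_div, ← div_div]
    exact h1
  ne_zero n x := by
    rw [dyIdx_volume ha]
    exact pow_ne_zero _ (by simpa using dySide_pos ha n)
  ne_top n x := by
    rw [dyIdx_volume ha]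
    exact ENNReal.pow_ne_top ENNReal.ofReal_ne_top
  doubling n x := by
    rw [dyIdx_volume ha, dyIdx_volume ha, dySide_succ, ENNReal.ofReal_mul (by norm_num), mul_pow]
    norm_num

/-- The closed cube that is the closure of the dyadic cell of generation `n` containing `x`. -/
def dyCube {a : ℝ} (ha : 0 < a) (n : ℕ) (x : Euc d) : Cube d where
  center := WithLp.toLp 2 fun i => dyIdx a n x i * dySide a n - a + dySide a n / 2
  side := dySide a n
  side_pos := dySide_pos ha n

lemma dyCell_subset {a : ℝ} (ha : 0 < a) (n : ℕ) (x : Euc d) :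
    (dyGrid d ha).cell n x ⊆ (dyCube ha n x).carrier := by
  intro y hy
  have hy' : y ∈ dyIdx a n ⁻¹' {dyIdx a n x} := hy
  rw [dyIdx_preimage ha] at hy'
  intro i
  have := hy' i (mem_univ i)
  simp only [mem_Ico] at this
  simp only [dyCube]
  rw [abs_le]
  constructor <;> linarith [this.1, this.2]

lemma mem_dyCube {a : ℝ} (ha : 0 < a) (n : ℕ) (x : Euc d) : x ∈ (dyCube ha n x).carrier :=
  dyCell_subset ha n x ((dyGrid d ha).self_mem_cell n x)

lemma dyCell_ae_eq {a : ℝ} (ha : 0 < a) (n : ℕ) (x : Euc d) :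
    (dyGrid d ha).cell n x =ᵐ[volume] (dyCube ha n x).carrier := by
  refine ae_eq_of_subset_of_measure_ge (dyCell_subset ha n x) ?_
    ((dyGrid d ha).measurableSet_cell n x).nullMeasurableSet (Cube.volume_ne_top _)
  rw [Cube.volume_eq]
  exact (dyIdx_volume ha n _).ge

lemma mem_dyCell_zero {a : ℝ} (ha : 0 < a) {x : Euc d} (hx : ‖x‖ < a) :
    x ∈ (dyGrid d ha).cell 0 0 := by
  have h : ∀ y : Euc d, ‖y‖ < a → dyIdx a 0 y = 0 := by
    intro y hy
    funext i
    have h1 : |y i| < a := (PiLp.norm_apply_le y i).trans_lt hy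
    rw [abs_lt] at h1
    simp only [dyIdx, dySide, pow_zero, div_one, Pi.zero_apply]
    rw [Int.floor_eq_zero_iff, mem_Ico]
    constructor
    · apply div_nonneg <;> linarith [h1.1]
    · rw [div_lt_one (by linarith)]; linarith [h1.2]
  exact (h x hx).trans (h 0 (by simpa using ha)).symm

end Dyadic

/-! ### Oscillations over cubes -/

section Osc
variable {d : ℕ} {b : Euc d → ℂ}

lemma cubeAvg_eq (b : Euc d → ℂ) (I : Cube d) : cubeAvg b I = ⨍ y in I.carrier, b y := by
  rw [cubeAvg, setAverage_eq, measureReal_def]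

lemma ofReal_osc_eq (hb : LocallyIntegrable b volume) (I : Cube d) (c : ℂ) :
    ENNReal.ofReal ((volume I.carrier).toReal⁻¹ * ∫ y in I.carrier, ‖b y - c‖)
      = (volume I.carrier)⁻¹ * ∫⁻ y in I.carrier, ‖b y - c‖ₑ := by
  have hbint : IntegrableOn b I.carrier volume := hb.integrableOn_isCompact I.isCompact
  rw [ENNReal.ofReal_mul (by positivity), ← ofReal_integral_norm_eq_lintegral_enorm,
    ENNReal.ofReal_inv_of_pos (ENNReal.toReal_pos I.volume_ne_zero I.volume_ne_top),
    ENNReal.ofReal_toReal I.volume_ne_top]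
  exact hbint.sub (integrableOn_const I.volume_ne_top)

lemma sharpMaximal_le (hb : LocallyIntegrable b volume) (c : ℂ) (x : Euc d) :
    sharpMaximal b x ≤ 2 * cubeMaximal (fun y => ‖b y - c‖ₑ) x := by
  refine iSup₂_le fun I hI => ?_
  have hbint : IntegrableOn b I.carrier volume := hb.integrableOn_isCompact I.isCompact
  rw [ofReal_osc_eq hb]
  calc (volume I.carrier)⁻¹ * ∫⁻ y in I.carrier, ‖b y - cubeAvg b I‖ₑ
      ≤ (volume I.carrier)⁻¹ * ∫⁻ y in I.carrier, (‖b y - c‖ₑ + ‖cubeAvg b I - c‖ₑ) := by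
        gcongr with y
        calc ‖b y - cubeAvg b I‖ₑ = ‖(b y - c) - (cubeAvg b I - c)‖ₑ := by ring_nf
          _ ≤ _ := enorm_sub_le
    _ = (volume I.carrier)⁻¹ * ((∫⁻ y in I.carrier, ‖b y - c‖ₑ) +
          volume I.carrier * ‖cubeAvg b I - c‖ₑ) := by
        rw [lintegral_add_right _ measurable_const, setLIntegral_const,
          mul_comm (volume I.carrier)]
    _ ≤ (volume I.carrier)⁻¹ * ((∫⁻ y in I.carrier, ‖b y - c‖ₑ) +
          ∫⁻ y in I.carrier, ‖b y - c‖ₑ) := by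
        gcongr _ * (_ + ?_)
        rw [cubeAvg_eq]
        exact measure_mul_enorm_setAverage_sub_le I.volume_ne_top hbint c
    _ = 2 * ((volume I.carrier)⁻¹ * ∫⁻ y in I.carrier, ‖b y - c‖ₑ) := by ring
    _ ≤ _ := by
        gcongr
        exact le_iSup₂ (f := fun (I : Cube d) (_ : x ∈ I.carrier) =>
            (volume I.carrier)⁻¹ * ∫⁻ y in I.carrier, ‖b y - c‖ₑ) I hI

lemma dyGrid_avg_eq {a : ℝ} (ha : 0 < a) (n : ℕ) (x : Euc d) :
    (dyGrid d ha).avg b n x = cubeAvg b (dyCube ha n x) := by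
  rw [cubeAvg_eq]
  exact setAverage_congr (dyCell_ae_eq ha n x)

lemma dyGrid_sharp_le (hb : LocallyIntegrable b volume) {a : ℝ} (ha : 0 < a) (x : Euc d) :
    (dyGrid d ha).sharp b x ≤ sharpMaximal b x := by
  refine iSup_le fun n => ?_
  have h : (dyGrid d ha).osc b n x = ENNReal.ofReal ((volume (dyCube ha n x).carrier).toReal⁻¹ *
      ∫ y in (dyCube ha n x).carrier, ‖b y - cubeAvg b (dyCube ha n x)‖) := by
    rw [ofReal_osc_eq hb, Grid.osc, dyGrid_avg_eq, measure_congr (dyCell_ae_eq ha n x),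
      setLIntegral_congr (dyCell_ae_eq ha n x)]
  rw [h]
  exact le_iSup₂ (f := fun (I : Cube d) (_ : x ∈ I.carrier) =>
    ENNReal.ofReal ((volume I.carrier).toReal⁻¹ * ∫ y in I.carrier, ‖b y - cubeAvg b I‖))
    (dyCube ha n x) (mem_dyCube ha n x)

lemma Cube.subset_closedBall (I : Cube d) {x : Euc d} (hx : x ∈ I.carrier) :
    I.carrier ⊆ Metric.closedBall x (√d * I.side) := by
  intro y hy
  rw [Metric.mem_closedBall, EuclideanSpace.dist_eq]
  have hside := I.side_pos
  calc √(∑ i, dist (y i) (x i) ^ 2) ≤ √(∑ _i : Fin d, I.side ^ 2) := by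
        refine Real.sqrt_le_sqrt (Finset.sum_le_sum fun i _ => ?_)
        refine pow_le_pow_left₀ dist_nonneg ?_ 2
        have h1 := abs_le.1 (hx i)
        have h2 := abs_le.1 (hy i)
        rw [Real.dist_eq, abs_le]
        constructor <;> linarith [h1.1, h1.2, h2.1, h2.2]
    _ = √d * I.side := by
        rw [Finset.sum_const, Finset.card_univ, Fintype.card_fin, nsmul_eq_mul,
          Real.sqrt_mul (by positivity), Real.sqrt_sq hside.le]

/-- Lebesgue differentiation along the dyadic grid. -/
lemma dyGrid_tendsto (hd : 1 ≤ d) (hb : LocallyIntegrable b volume) {a : ℝ} (ha : 0 < a) :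
    ∀ᵐ x, Filter.Tendsto (fun n => (dyGrid d ha).avg b n x) Filter.atTop (nhds (b x)) := by
  have hd0 : (0 : ℝ) < √d := Real.sqrt_pos.2 (by exact_mod_cast hd)
  set V : ℝ≥0∞ := volume (Metric.ball (0 : Euc d) 1) with hV
  have hVt : V ≠ ∞ := measure_ball_lt_top.ne
  have hball : ∀ (x : Euc d) {ρ : ℝ}, 0 ≤ ρ →
      volume (Metric.closedBall x ρ) = ENNReal.ofReal (ρ ^ d) * V := by
    intro x ρ hρ
    rw [Measure.addHaar_closedBall _ _ hρ, finrank_euclideanSpace, Fintype.card_fin]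
  -- The first summand handles the doubling of balls, the second the comparison of a cube with
  -- a ball containing it.
  set K : ℝ≥0∞ := 3 ^ d + ENNReal.ofReal ((3 * √d) ^ d) * V with hK
  have hKt : K ≠ ∞ := by
    have : (3 : ℝ≥0∞) ^ d ≠ ∞ := ENNReal.pow_ne_top (by norm_num)
    rw [hK]; finiteness
  have hdouble : ∀ x : Euc d, ∃ᶠ ρ in nhdsWithin (0 : ℝ) (Ioi 0),
      volume (Metric.closedBall x (3 * ρ)) ≤ K.toNNReal * volume (Metric.closedBall x ρ) := by
    intro x
    refine Filter.Eventually.frequently ?_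
    filter_upwards [self_mem_nhdsWithin] with ρ hρ
    have hρ' : (0 : ℝ) ≤ ρ := le_of_lt hρ
    rw [ENNReal.coe_toNNReal hKt, hball x hρ', hball x (by positivity), mul_pow,
      ENNReal.ofReal_mul (by positivity), mul_assoc]
    gcongr
    rw [ENNReal.ofReal_pow (by norm_num)]
    norm_num [hK]
  set v := Vitali.vitaliFamily (volume : Measure (Euc d)) K.toNNReal hdouble with hv
  filter_upwards [v.ae_tendsto_average hb] with x hx
  have hside : Filter.Tendsto (fun n => √d * dySide a n) Filter.atTop (nhds 0) := by
    have h1 : Filter.Tendsto (fun n : ℕ => ((1 : ℝ) / 2) ^ n) Filter.atTop (nhds 0) :=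
      tendsto_pow_atTop_nhds_zero_of_lt_one (by norm_num) (by norm_num)
    have h2 := h1.const_mul (√d * (2 * a))
    rw [mul_zero] at h2
    refine h2.congr fun n => ?_
    unfold dySide
    rw [one_div, inv_pow, mul_assoc, div_eq_mul_inv]
  have hfilter : Filter.Tendsto (fun n => (dyCube ha n x).carrier) Filter.atTop
      (v.filterAt x) := by
    rw [VitaliFamily.tendsto_filterAt_iff]
    constructor
    · refine Filter.Eventually.of_forall fun n => ?_
      refine ⟨Cube.isClosed _, Cube.interior_nonempty _, √d * (dyCube ha n x).side,
        Cube.subset_closedBall _ (mem_dyCube ha n x), ?_⟩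
      have hpos := (dyCube ha n x).side_pos
      rw [ENNReal.coe_toNNReal hKt, hball x (by positivity), Cube.volume_eq, ← mul_assoc 3,
        mul_pow, ENNReal.ofReal_mul (by positivity), ENNReal.ofReal_pow hpos.le]
      calc ENNReal.ofReal ((3 * √d) ^ d) * ENNReal.ofReal (dyCube ha n x).side ^ d * V
          = ENNReal.ofReal ((3 * √d) ^ d) * V * ENNReal.ofReal (dyCube ha n x).side ^ d := by
            ring
        _ ≤ _ := by
            gcongr
            exact le_add_self
    · intro ε hε
      filter_upwards [hside.eventually (gt_mem_nhds hε)] with n hn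
      exact (Cube.subset_closedBall _ (mem_dyCube ha n x)).trans
        (Metric.closedBall_subset_closedBall hn.le)
  refine (hx.comp hfilter).congr fun n => ?_
  rw [dyGrid_avg_eq, cubeAvg_eq]
  rfl

end Osc

/-! ### Both inequalities -/

section Final
variable {d : ℕ} {b : Euc d → ℂ}

/-- The lower bound, from the maximal theorem applied to `b - c`. -/
lemma lintegral_sharpMaximal_le (hd : 1 ≤ d) {r : ℝ} (hr : 1 < r)
    (hb : LocallyIntegrable b volume) (c : ℂ) :
    ∫⁻ x, sharpMaximal b x ^ r ≤ 2 ^ r * hlConst d r * ∫⁻ x, ‖b x - c‖ₑ ^ r := by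
  have hr0 : 0 ≤ r := by linarith
  have hg : AEMeasurable (fun y => ‖b y - c‖ₑ) volume :=
    (hb.aestronglyMeasurable.sub aestronglyMeasurable_const).enorm
  set g := hg.mk _ with hgdef
  have hM : ∀ x, cubeMaximal (fun y => ‖b y - c‖ₑ) x = cubeMaximal g x := by
    intro x
    unfold cubeMaximal
    congr! 4 with I hI
    exact lintegral_congr_ae (ae_restrict_of_ae hg.ae_eq_mk)
  calc ∫⁻ x, sharpMaximal b x ^ r ≤ ∫⁻ x, 2 ^ r * cubeMaximal g x ^ r := by
        refine lintegral_mono fun x => ?_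
        rw [← ENNReal.mul_rpow_of_nonneg _ _ hr0, ← hM]
        exact ENNReal.rpow_le_rpow (sharpMaximal_le hb c x) hr0
    _ = 2 ^ r * ∫⁻ x, cubeMaximal g x ^ r :=
        lintegral_const_mul' _ _ (ENNReal.rpow_ne_top_of_nonneg hr0 (by norm_num))
    _ ≤ 2 ^ r * (hlConst d r * ∫⁻ x, g x ^ r) := by
        gcongr 2 ^ r * ?_
        exact cubeMaximal_strong hd hr hg.measurable_mk
    _ = 2 ^ r * hlConst d r * ∫⁻ x, ‖b x - c‖ₑ ^ r := by
        rw [mul_assoc]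
        congr 2
        refine lintegral_congr_ae ?_
        filter_upwards [hg.ae_eq_mk] with x hx
        rw [hx]

/-- The upper bound. The constant `z` is a limit point of the averages of `b` over the cubes
`[-a, a)^d` as `a → ∞`. -/
lemma exists_lintegral_le (hd : 1 ≤ d) {r : ℝ} (hr : 1 < r)
    (hb : LocallyIntegrable b volume) (hfin : ∫⁻ x, sharpMaximal b x ^ r ≠ ∞) :
    ∃ z : ℂ, ∫⁻ x, ‖b x - z‖ₑ ^ r ≤ gridConst (2 ^ d) r * ∫⁻ x, sharpMaximal b x ^ r := by
  have hr0 : 0 < r := by linarith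
  have hDt : (2 : ℝ≥0∞) ^ d ≠ ∞ := ENNReal.pow_ne_top (by norm_num)
  set A := gridConst (2 ^ d) r * ∫⁻ x, sharpMaximal b x ^ r with hA
  have hAt : A ≠ ∞ := ENNReal.mul_ne_top (gridConst_ne_top hDt hr0) hfin
  have hpos : ∀ N : ℕ, (0 : ℝ) < N + 1 := fun N => by positivity
  set Q : ℕ → Set (Euc d) := fun N => (dyGrid d (hpos N)).cell 0 0 with hQ
  have hQm : ∀ N, MeasurableSet (Q N) := fun N => Grid.measurableSet_cell _ _ _
  set c : ℕ → ℂ := fun N => (dyGrid d (hpos N)).avg b 0 0 with hc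
  have hloc : ∀ N, ∫⁻ x in Q N, ‖b x - c N‖ₑ ^ r ≤ A := by
    intro N
    have hbint : ∀ n x, IntegrableOn b ((dyGrid d (hpos N)).cell n x) volume := fun n x =>
      (hb.integrableOn_isCompact (Cube.isCompact _)).mono_set (dyCell_subset (hpos N) n x)
    refine ((dyGrid d (hpos N)).lintegral_sub_avg_le hDt hbint
      (dyGrid_tendsto hd hb (hpos N)) 0 hr0).trans ?_
    rw [hA]
    gcongr _ * ?_
    refine (setLIntegral_le_lintegral _ _).trans (lintegral_mono fun x => ?_)
    exact ENNReal.rpow_le_rpow (dyGrid_sharp_le hb (hpos N) x) hr0.le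
  have hball : ∀ N, Metric.ball (0 : Euc d) 1 ⊆ Q N := by
    intro N x hx
    refine mem_dyCell_zero (hpos N) ?_
    rw [mem_ball_zero_iff] at hx
    have : (0 : ℝ) ≤ N := Nat.cast_nonneg N
    linarith
  -- On the unit ball `b` is at bounded `L^r` distance from every `c N`, so the `c N` are bounded.
  set V := volume (Metric.ball (0 : Euc d) 1) with hV
  have hV0 : V ≠ 0 := (Metric.measure_ball_pos _ _ one_pos).ne'
  have hmeas : ∀ z : ℂ, AEMeasurable (fun x => ‖b x - z‖ₑ ^ r) volume := fun z =>
    ((hb.aestronglyMeasurable.sub aestronglyMeasurable_const).enorm).pow_const r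
  have hbdd : ∀ N, ‖c N - c 0‖ₑ ^ r ≤ 2 ^ (r - 1) * (A + A) / V := by
    intro N
    rw [ENNReal.le_div_iff_mul_le (Or.inl hV0) (Or.inl measure_ball_lt_top.ne)]
    calc ‖c N - c 0‖ₑ ^ r * V = ∫⁻ x in Metric.ball (0 : Euc d) 1, ‖c N - c 0‖ₑ ^ r := by
          rw [setLIntegral_const]
      _ ≤ ∫⁻ x in Metric.ball (0 : Euc d) 1,
            2 ^ (r - 1) * (‖b x - c 0‖ₑ ^ r + ‖b x - c N‖ₑ ^ r) := by
          refine lintegral_mono fun x => ?_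
          refine le_trans ?_ (ENNReal.rpow_add_le_mul_rpow_add_rpow _ _ hr.le)
          refine ENNReal.rpow_le_rpow ?_ hr0.le
          calc ‖c N - c 0‖ₑ = ‖(b x - c 0) - (b x - c N)‖ₑ := by ring_nf
            _ ≤ _ := enorm_sub_le
      _ = 2 ^ (r - 1) * ((∫⁻ x in Metric.ball (0 : Euc d) 1, ‖b x - c 0‖ₑ ^ r) +
            ∫⁻ x in Metric.ball (0 : Euc d) 1, ‖b x - c N‖ₑ ^ r) := by
          rw [lintegral_const_mul' _ _ (ENNReal.rpow_ne_top_of_nonneg (by linarith) (by norm_num)),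
            lintegral_add_left' (hmeas _).restrict]
      _ ≤ 2 ^ (r - 1) * (A + A) := by
          gcongr _ * (?_ + ?_)
          · exact (lintegral_mono_set (hball 0)).trans (hloc 0)
          · exact (lintegral_mono_set (hball N)).trans (hloc N)
  set R : ℝ≥0∞ := (2 ^ (r - 1) * (A + A) / V) ^ (1 / r) with hR
  have hRt : R ≠ ∞ := by
    refine ENNReal.rpow_ne_top_of_nonneg (by positivity) (ENNReal.div_ne_top ?_ hV0)
    exact ENNReal.mul_ne_top (ENNReal.rpow_ne_top_of_nonneg (by linarith) (by norm_num))
      (ENNReal.add_ne_top.2 ⟨hAt, hAt⟩)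
  have hcball : ∀ N, c N ∈ Metric.closedBall (c 0) R.toReal := by
    intro N
    have h1 : ‖c N - c 0‖ₑ ≤ R := by
      rw [hR, one_div, ENNReal.le_rpow_inv_iff hr0]
      exact hbdd N
    rw [mem_closedBall_iff_norm, ← toReal_enorm]
    exact ENNReal.toReal_mono hRt h1
  obtain ⟨z, -, φ, hφ, hz⟩ := tendsto_subseq_of_bounded Metric.isBounded_closedBall hcball
  refine ⟨z, ?_⟩
  have hptw : ∀ x, Filter.Tendsto (fun j => (Q (φ j)).indicator
      (fun x => ‖b x - c (φ j)‖ₑ ^ r) x) Filter.atTop (nhds (‖b x - z‖ₑ ^ r)) := by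
    intro x
    have h1 : Filter.Tendsto (fun j => ‖b x - c (φ j)‖ₑ ^ r) Filter.atTop
        (nhds (‖b x - z‖ₑ ^ r)) :=
      (ENNReal.continuous_rpow_const.tendsto _).comp
        ((continuous_enorm.tendsto _).comp (hz.const_sub (b x)))
    refine h1.congr' ?_
    obtain ⟨M, hM⟩ := exists_nat_gt ‖x‖
    filter_upwards [Filter.eventually_ge_atTop M] with j hj
    rw [indicator_of_mem]
    refine mem_dyCell_zero (hpos (φ j)) ?_
    have h2 : (M : ℝ) ≤ φ j := by exact_mod_cast hj.trans hφ.le_apply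
    linarith
  calc ∫⁻ x, ‖b x - z‖ₑ ^ r
      = ∫⁻ x, Filter.liminf (fun j => (Q (φ j)).indicator
          (fun x => ‖b x - c (φ j)‖ₑ ^ r) x) Filter.atTop :=
        lintegral_congr fun x => (hptw x).liminf_eq.symm
    _ ≤ Filter.liminf (fun j => ∫⁻ x, (Q (φ j)).indicator
          (fun x => ‖b x - c (φ j)‖ₑ ^ r) x) Filter.atTop :=
        lintegral_liminf_le' fun j => (hmeas _).indicator (hQm _)
    _ ≤ A := by
        refine Filter.liminf_le_of_frequently_le' (Filter.Frequently.of_forall fun j => ?_)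
        rw [lintegral_indicator (hQm _)]
        exact hloc _

end Final

theorem statement2 (d : ℕ) (hd : 1 ≤ d) (r : ℝ) (hr : 1 < r) :
    ∃ C : ℝ, 1 ≤ C ∧ ∀ b : Euc d → ℂ, MeasureTheory.LocallyIntegrable b volume →
      (ENNReal.ofReal C)⁻¹ * (∫⁻ x, sharpMaximal b x ^ r) ^ (1 / r) ≤ dotLrNorm r b ∧
      dotLrNorm r b ≤ ENNReal.ofReal C * (∫⁻ x, sharpMaximal b x ^ r) ^ (1 / r) := by
  have hr0 : 0 < r := by linarith
  have hri : 0 ≤ 1 / r := by positivity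
  set A : ℝ≥0∞ := (2 ^ r * hlConst d r) ^ (1 / r) with hA
  set B : ℝ≥0∞ := gridConst (2 ^ d) r ^ (1 / r) with hB
  have hAt : A ≠ ∞ := ENNReal.rpow_ne_top_of_nonneg hri (ENNReal.mul_ne_top
    (ENNReal.rpow_ne_top_of_nonneg hr0.le (by norm_num)) (hlConst_ne_top d hr))
  have hBt : B ≠ ∞ := ENNReal.rpow_ne_top_of_nonneg hri
    (gridConst_ne_top (ENNReal.pow_ne_top (by norm_num)) hr0)
  set C : ℝ := max 1 (max A.toReal B.toReal) with hC
  have hC1 : 1 ≤ C := le_max_left _ _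
  have hAC : A ≤ ENNReal.ofReal C := by
    rw [← ENNReal.ofReal_toReal hAt]
    exact ENNReal.ofReal_le_ofReal ((le_max_left _ _).trans (le_max_right _ _))
  have hBC : B ≤ ENNReal.ofReal C := by
    rw [← ENNReal.ofReal_toReal hBt]
    exact ENNReal.ofReal_le_ofReal ((le_max_right _ _).trans (le_max_right _ _))
  have hC0 : ENNReal.ofReal C ≠ 0 := by
    simpa using (by linarith : 0 < C)
  refine ⟨C, hC1, fun b hb => ?_⟩
  have hnorm : ∀ c : ℂ, eLpNorm (fun x => b x - c) (ENNReal.ofReal r) volume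
      = (∫⁻ x, ‖b x - c‖ₑ ^ r) ^ (1 / r) := by
    intro c
    rw [eLpNorm_eq_lintegral_rpow_enorm_toReal (by simpa using hr0) ENNReal.ofReal_ne_top,
      ENNReal.toReal_ofReal hr0.le]
  constructor
  · refine le_iInf fun c => ?_
    rw [hnorm, ENNReal.inv_mul_le_iff hC0 ENNReal.ofReal_ne_top]
    calc (∫⁻ x, sharpMaximal b x ^ r) ^ (1 / r)
        ≤ (2 ^ r * hlConst d r * ∫⁻ x, ‖b x - c‖ₑ ^ r) ^ (1 / r) :=
          ENNReal.rpow_le_rpow (lintegral_sharpMaximal_le hd hr hb c) hri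
      _ = A * (∫⁻ x, ‖b x - c‖ₑ ^ r) ^ (1 / r) := ENNReal.mul_rpow_of_nonneg _ _ hri
      _ ≤ _ := by gcongr
  · rcases eq_or_ne (∫⁻ x, sharpMaximal b x ^ r) ∞ with htop | hfin
    · rw [htop, ENNReal.top_rpow_of_pos (by positivity), ENNReal.mul_top hC0]
      exact le_top
    obtain ⟨c, hc⟩ := exists_lintegral_le hd hr hb hfin
    refine (iInf_le _ c).trans ?_
    rw [hnorm]
    calc (∫⁻ x, ‖b x - c‖ₑ ^ r) ^ (1 / r)
        ≤ (gridConst (2 ^ d) r * ∫⁻ x, sharpMaximal b x ^ r) ^ (1 / r) :=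
          ENNReal.rpow_le_rpow hc hri
      _ = B * (∫⁻ x, sharpMaximal b x ^ r) ^ (1 / r) := ENNReal.mul_rpow_of_nonneg _ _ hri
      _ ≤ _ := by gcongr
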